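/- Let H = Pa ∪_{e_rep} Cy be a cycle-with-handles, where Pa is an st-path, e_rep ∈ E(Pa), and Cy is an st-cycle. Let d_rep = d_Pa(e_rep), let γ₁, γ₂ be the two directed paths from s_Cy to t_Cy comprising Cy (with γ₁ ∩ γ₂ = {s_Cy, t_Cy}), and let ht_cyc = max_{u∈γ₁} dist_Cy(u,{s_Cy,t_Cy}) + max_{u∈γ₂} dist_Cy(u,{s_Cy,t_Cy}). Then for every n ≥ 0, c₁(TC(H^{⊘n})) ≥ ((2−√2)/4)·d_rep·ht_cyc·n. -/

import Mathlib

open Finset MeasureTheory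

open Finset MeasureTheory

/-- The transportation cost norm of a zero-total-mass signed measure `μ` (represented as a
function `V → ℝ`) on a finite metric space with distance `d`: the infimum of costs of
transportation plans representing `μ`. -/
noncomputable def TCnorm {V : Type*} [Fintype V] [DecidableEq V]
    (d : V → V → ℝ) (μ : V → ℝ) : ℝ :=
  sInf { c : ℝ | ∃ (n : ℕ) (a : Fin n → ℝ) (x y : Fin n → V),
    (∀ i, 0 ≤ a i) ∧
    (∀ z : V, μ z = ∑ i, a i * ((if x i = z then (1 : ℝ) else 0) -
      (if y i = z then (1 : ℝ) else 0))) ∧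
    c = ∑ i, a i * d (x i) (y i) }

/-- The `L₁`-distortion of a space `M` equipped with a distance function `ρ`:
the infimum of `D ≥ 1` such that there is a measure space `(Ω, ν)` and a map
`f : M → L₁(ν)` with `ρ x y ≤ ‖f x - f y‖₁ ≤ D * ρ x y` for all `x, y`. -/
noncomputable def c1OfDist {M : Type*} (ρ : M → M → ℝ) : ℝ :=
  sInf { D : ℝ | 1 ≤ D ∧ ∃ (Ω : Type) (_ : MeasurableSpace Ω) (ν : Measure Ω)
    (f : M → Lp ℝ 1 ν), ∀ x y : M,
      ρ x y ≤ dist (f x) (f y) ∧ dist (f x) (f y) ≤ D * ρ x y }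

/-- The `L₁`-distortion of the transportation cost space `TC(V, d)`, i.e. of the space of
zero-total-mass signed measures on `V` with the metric induced by the transportation cost
norm. -/
noncomputable def c1TC {V : Type*} [Fintype V] [DecidableEq V] (d : V → V → ℝ) : ℝ :=
  c1OfDist (fun μ ν : {μ : V → ℝ // ∑ x, μ x = 0} => TCnorm d (fun x => μ.1 x - ν.1 x))

/-- The support of a signed measure given as a function. -/
def msupp {V : Type*} (μ : V → ℝ) : Set V := {x | μ x ≠ 0}

/-- Diameter of a set with respect to a distance function. -/
noncomputable def sDiam {V : Type*} (d : V → V → ℝ) (S : Set V) : ℝ :=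
  sSup { c : ℝ | ∃ x ∈ S, ∃ y ∈ S, c = d x y }

/-- Distance between two sets with respect to a distance function. -/
noncomputable def sDist {V : Type*} (d : V → V → ℝ) (S T : Set V) : ℝ :=
  sInf { c : ℝ | ∃ x ∈ S, ∃ y ∈ T, c = d x y }
/-- A finite weighted directed graph with distinguished source and sink vertices, edge
lengths, and an edge thickness function. This is the underlying data of an `st`-graph. -/
structure WGraph : Type 1 where
  /-- vertex set -/
  V : Type
  /-- edge index set -/
  ι : Type
  finV : Fintype V
  decV : DecidableEq V
  finι : Fintype ι
  decι : DecidableEq ι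
  /-- initial vertex of an edge -/
  src : ι → V
  /-- terminal vertex of an edge -/
  dst : ι → V
  /-- length of an edge -/
  len : ι → ℝ
  /-- thickness of an edge -/
  th : ι → ℝ
  /-- source vertex -/
  s : V
  /-- sink vertex -/
  t : V

attribute [instance] WGraph.finV WGraph.decV WGraph.finι WGraph.decι

namespace WGraph

/-- Initial vertex of a step (an edge traversed forwards or backwards). -/
def stepSrc (G : WGraph) (p : G.ι × Bool) : G.V := if p.2 then G.src p.1 else G.dst p.1

/-- Terminal vertex of a step. -/
def stepDst (G : WGraph) (p : G.ι × Bool) : G.V := if p.2 then G.dst p.1 else G.src p.1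

/-- `G.IsWalk x y l` : the list of steps `l` forms a walk from `x` to `y` in the underlying
undirected graph of `G`. -/
def IsWalk (G : WGraph) : G.V → G.V → List (G.ι × Bool) → Prop
  | x, y, [] => x = y
  | x, y, p :: l => G.stepSrc p = x ∧ G.IsWalk (G.stepDst p) y l

/-- `G.IsDiWalk x y l` : the list of edges `l` forms a directed walk from `x` to `y`. -/
def IsDiWalk (G : WGraph) : G.V → G.V → List G.ι → Prop
  | x, y, [] => x = y
  | x, y, e :: l => G.src e = x ∧ G.IsDiWalk (G.dst e) y l

/-- The length of a directed walk. -/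
def diLen (G : WGraph) (l : List G.ι) : ℝ := (l.map G.len).sum

/-- The weighted shortest-path metric of `G`. -/
noncomputable def gdist (G : WGraph) (x y : G.V) : ℝ :=
  sInf { c : ℝ | ∃ l : List (G.ι × Bool), G.IsWalk x y l ∧
    c = (l.map fun p => G.len p.1).sum }

end WGraph

/-- `G` is an `st`-graph: it has positive edge lengths and thicknesses, it is connected,
its weighted shortest-path metric satisfies `d(s,t) = 1`, every directed path is a
geodesic, and the thickness function is witnessed by a finite nonempty family of directed
edge paths from `s` to `t` via `th(e) = |{i : e ∈ γ_i}| / |I|`. -/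
structure IsSTGraph (G : WGraph) : Prop where
  s_ne_t : G.s ≠ G.t
  len_pos : ∀ e, 0 < G.len e
  th_pos : ∀ e, 0 < G.th e
  conn : ∀ x y : G.V, ∃ l, G.IsWalk x y l
  dist_st : G.gdist G.s G.t = 1
  dir_geodesic : ∀ (x y : G.V) (l : List G.ι), G.IsDiWalk x y l → G.gdist x y = G.diLen l
  th_witness : ∃ (m : ℕ) (γ : Fin (m + 1) → List G.ι),
    (∀ i, G.IsDiWalk G.s G.t (γ i)) ∧
    ∀ e : G.ι, G.th e = ((Finset.univ.filter fun i => e ∈ γ i).card : ℝ) / (m + 1)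

/-- `G` is an `st`-path: it consists of a single directed path from `s` to `t`, and all
edges have thickness `1`. -/
def IsSTPath (G : WGraph) : Prop :=
  ∃ (k : ℕ) (E : Fin k ≃ G.ι) (v : Fin (k + 1) → G.V),
    Function.Bijective v ∧ v 0 = G.s ∧ v (Fin.last k) = G.t ∧
    (∀ i : Fin k, G.src (E i) = v i.castSucc ∧ G.dst (E i) = v i.succ) ∧
    (∀ e, G.th e = 1)

namespace WGraph

/-- The map sending a vertex of `H` to the corresponding vertex of `G ⊘ H` obtained by
replacing the edge `e` of `G` with a copy of `H` (where `s_H` is identified with the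
initial vertex of `e` and `t_H` with the terminal vertex of `e`). -/
def slashEmbed (G H : WGraph) (e : G.ι) (v : H.V) :
    G.V ⊕ (G.ι × {v : H.V // v ≠ H.s ∧ v ≠ H.t}) :=
  if hs : v = H.s then Sum.inl (G.src e)
  else if ht : v = H.t then Sum.inl (G.dst e)
  else Sum.inr (e, ⟨v, hs, ht⟩)

/-- The slash product `G ⊘ H`: every edge of `G` is replaced by a copy of `H`. New edge
lengths and thicknesses are the products of the corresponding ones of `G` and `H`. -/
def slash (G H : WGraph) : WGraph where
  V := G.V ⊕ (G.ι × {v : H.V // v ≠ H.s ∧ v ≠ H.t})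
  ι := G.ι × H.ι
  finV := inferInstance
  decV := inferInstance
  finι := inferInstance
  decι := inferInstance
  src := fun p => slashEmbed G H p.1 (H.src p.2)
  dst := fun p => slashEmbed G H p.1 (H.dst p.2)
  len := fun p => G.len p.1 * H.len p.2
  th := fun p => G.th p.1 * H.th p.2
  s := Sum.inl G.s
  t := Sum.inl G.t

/-- The trivial `st`-path: a single directed edge from `s` to `t` of length 1 and
thickness 1. -/
def edgeGraph : WGraph where
  V := Bool
  ι := Unit
  finV := inferInstance
  decV := inferInstance
  finι := inferInstance
  decι := inferInstance
  src := fun _ => false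
  dst := fun _ => true
  len := fun _ => 1
  th := fun _ => 1
  s := false
  t := true

/-- Slash powers: `G^{⊘0}` is a single directed edge from `s` to `t` of length 1 and
thickness 1, and `G^{⊘(n+1)} = G^{⊘n} ⊘ G`. -/
def slashPow (G : WGraph) : ℕ → WGraph
  | 0 => edgeGraph
  | n + 1 => (G.slashPow n).slash G

end WGraph

namespace WGraph

/-- The edge replacement `G ∪_{e₀} H`: the edge `e₀` of `G` is replaced by a copy of `H`,
identifying the initial vertex of `e₀` with `s_H` and the terminal vertex of `e₀` with
`t_H`. New edges get length `d_G(e₀)·d_H(e')` and thickness `th_G(e₀)·th_H(e')`; other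
edges are unchanged. -/
def edgeReplace (G : WGraph) (e₀ : G.ι) (H : WGraph) : WGraph where
  V := G.V ⊕ {v : H.V // v ≠ H.s ∧ v ≠ H.t}
  ι := {e : G.ι // e ≠ e₀} ⊕ H.ι
  finV := inferInstance
  decV := inferInstance
  finι := inferInstance
  decι := inferInstance
  src := Sum.elim (fun e => Sum.inl (G.src e.1))
    (fun e' =>
      if hs : H.src e' = H.s then Sum.inl (G.src e₀)
      else if ht : H.src e' = H.t then Sum.inl (G.dst e₀)
      else Sum.inr ⟨H.src e', hs, ht⟩)
  dst := Sum.elim (fun e => Sum.inl (G.dst e.1))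
    (fun e' =>
      if hs : H.dst e' = H.s then Sum.inl (G.src e₀)
      else if ht : H.dst e' = H.t then Sum.inl (G.dst e₀)
      else Sum.inr ⟨H.dst e', hs, ht⟩)
  len := Sum.elim (fun e => G.len e.1) (fun e' => G.len e₀ * H.len e')
  th := Sum.elim (fun e => G.th e.1) (fun e' => G.th e₀ * H.th e')
  s := Sum.inl G.s
  t := Sum.inl G.t

end WGraph

/-!
Let `f` be an embedding of `TC(H^{⊘n})` into `L₁`, restricted to the lattice of integral measures.
Averaging `f` over long segments in each lattice direction makes its second differences small while
keeping it at bounded distance from `f`, so any inequality between norms of finite linear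
combinations which holds for all linear maps into `L₁` holds for the increments of `f` up to an
arbitrarily small error. For linear maps such an inequality may be integrated, and then decomposed
into layers, so it suffices to check it on the indicators of vertex sets.

The inequality tests the chords of `H^{⊘n}`: each copy of the cycle carries a chord joining the
highest vertices of its two sides, and those of thickness `2^{-k}` are the chords of scale `k`.
The two sides of a copy leave room for a Lipschitz function to go up or down along its chord
independently of the other copies, so the chords of one scale with arbitrary signs have transport
norm at least `d_rep * ht_cyc` times their total length. On the other hand, if a cut separates `N k`
chords of scale `k`, then `2^{-k} * N k` is at most twice its total weight `W`, while with random
signs it sees only `√(N k)` of them on average. As `N k` is an integer, the sum of `2^{-k} * √(N k)`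
over all scales is at most `W` times a geometric series of ratio `1/√2`, independently of `n`. So
the `n` scales contribute `n * d_rep * ht_cyc` on one side of the inequality and a constant times
the distortion on the other.
-/

open scoped fwdDiff Topology
open Filter

section Averaging

variable {X Y : Type*} [AddCommGroup X] [NormedAddCommGroup Y]

lemma fwdDiff_comm (v w : X) (F : X → Y) : Δ_[v] (Δ_[w] F) = Δ_[w] (Δ_[v] F) := by
  funext x
  simp only [fwdDiff, add_right_comm x w v]
  abel

lemma norm_fwdDiff_nsmul_le (w : X) (F : X → Y) (n : ℕ) (x : X) :
    ‖Δ_[n • w] F x‖ ≤ birkhoffSum (· + w) (fun x ↦ ‖Δ_[w] F x‖) n x := by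
  have htelescope : ∑ k ∈ range n, Δ_[w] F (x + k • w) = Δ_[n • w] F x := by
    simpa [fwdDiff, succ_nsmul, add_assoc] using sum_range_sub (fun k ↦ F (x + k • w)) n
  simpa only [← htelescope, birkhoffSum, add_right_iterate] using norm_sum_le _ _

lemma tendstoUniformly_zero_of_norm_le {α : Type*} {f : ℕ → α → Y} {c : ℕ → ℝ}
    (hc : Tendsto c atTop (𝓝 0)) (hf : ∀ n x, ‖f n x‖ ≤ c n) : TendstoUniformly f 0 atTop := by
  refine Metric.tendstoUniformly_iff.2 fun ε hε ↦ ?_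
  filter_upwards [hc.eventually_lt_const hε] with n hn x
  simpa using (hf n x).trans_lt hn

variable [NormedSpace ℝ Y]

lemma norm_birkhoffAverage_le {α : Type*} (f : α → α) {F : α → Y} {K : ℝ}
    (hF : ∀ x, ‖F x‖ ≤ K) (n : ℕ) (x : α) : ‖birkhoffAverage ℝ f F n x‖ ≤ K := by
  rcases n.eq_zero_or_pos with rfl | hn
  · simpa using (norm_nonneg _).trans (hF x)
  rw [birkhoffAverage, norm_smul, norm_inv, Real.norm_natCast, inv_mul_le_iff₀ (by positivity)]
  simpa [birkhoffSum] using norm_sum_le_of_le (range n) fun k _ ↦ hF (f^[k] x)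

lemma birkhoffAverage_mono {α : Type*} (f : α → α) {φ ψ : α → ℝ} (h : φ ≤ ψ) (n : ℕ) :
    birkhoffAverage ℝ f φ n ≤ birkhoffAverage ℝ f ψ n := fun _ ↦ by
  simp only [birkhoffAverage, birkhoffSum, smul_eq_mul]
  gcongr
  exact h _

lemma birkhoffAverage_const {α : Type*} (f : α → α) (c : ℝ) {n : ℕ} (hn : n ≠ 0) :
    birkhoffAverage ℝ f (fun _ ↦ c) n = fun _ ↦ c :=
  birkhoffAverage_of_comp_eq ℝ rfl (Nat.cast_ne_zero.2 hn)

lemma birkhoffAverage_translate_comm (e e' : X) (F : X → Y) (m n : ℕ) :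
    birkhoffAverage ℝ (· + e) (birkhoffAverage ℝ (· + e') F n) m =
      birkhoffAverage ℝ (· + e') (birkhoffAverage ℝ (· + e) F m) n := by
  funext x
  simp only [birkhoffAverage, birkhoffSum, add_right_iterate, ← smul_sum]
  rw [smul_comm, sum_comm]
  simp only [add_right_comm]

lemma fwdDiff_birkhoffAverage (w e : X) (F : X → Y) (n : ℕ) :
    Δ_[w] (birkhoffAverage ℝ (· + e) F n) = birkhoffAverage ℝ (· + e) (Δ_[w] F) n := by
  funext x
  simp only [fwdDiff, birkhoffAverage, birkhoffSum, add_right_iterate, ← smul_sub,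
    ← sum_sub_distrib, add_right_comm x w]

lemma fwdDiff_birkhoffAverage_self (e : X) (F : X → Y) (n : ℕ) :
    Δ_[e] (birkhoffAverage ℝ (· + e) F n) = (n : ℝ)⁻¹ • Δ_[n • e] F := by
  funext x
  simpa [fwdDiff, add_right_iterate] using
    birkhoffAverage_apply_sub_birkhoffAverage (R := ℝ) (· + e) F n x

lemma norm_birkhoffAverage_translate_sub_le {e : X} {F : X → Y} {K : ℕ → ℝ}
    (hF : ∀ k x, ‖Δ_[k • e] F x‖ ≤ K k) {n : ℕ} (hn : n ≠ 0) (x : X) :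
    ‖birkhoffAverage ℝ (· + e) F n x - F x‖ ≤ (n : ℝ)⁻¹ * ∑ k ∈ range n, K k := by
  have havg : birkhoffAverage ℝ (· + e) F n x - F x =
      (n : ℝ)⁻¹ • ∑ k ∈ range n, Δ_[k • e] F x := by
    have hn' : (n : ℝ) ≠ 0 := Nat.cast_ne_zero.2 hn
    simp only [fwdDiff, sum_sub_distrib, sum_const, card_range, smul_sub, birkhoffAverage,
      birkhoffSum, add_right_iterate, ← Nat.cast_smul_eq_nsmul ℝ, inv_smul_smul₀ hn']
  rw [havg, norm_smul, norm_inv, Real.norm_natCast]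
  gcongr
  exact norm_sum_le_of_le _ fun k _ ↦ hF k x

lemma tendstoUniformly_birkhoffAverage_zero {f : ℕ → X → Y} (hf : TendstoUniformly f 0 atTop)
    (e : X) (k : ℕ → ℕ) :
    TendstoUniformly (fun n ↦ birkhoffAverage ℝ (· + e) (f n) (k n)) 0 atTop := by
  refine Metric.tendstoUniformly_iff.2 fun ε hε ↦ ?_
  filter_upwards [Metric.tendstoUniformly_iff.1 hf (ε / 2) (half_pos hε)] with n hn x
  have hbound : ∀ y, ‖f n y‖ ≤ ε / 2 := fun y ↦ by simpa using (hn y).le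
  simpa using (norm_birkhoffAverage_le _ hbound (k n) x).trans_lt (half_lt_self hε)

lemma tendstoUniformly_sum_smul {α β : Type*} (s : Finset β) (c : β → ℝ)
    {f : β → ℕ → α → Y} (hf : ∀ b ∈ s, TendstoUniformly (f b) 0 atTop) :
    TendstoUniformly (fun n x ↦ ∑ b ∈ s, c b • f b n x) 0 atTop := by
  classical
  induction s using Finset.induction_on with
  | empty => simpa using tendstoUniformly_zero_of_norm_le tendsto_const_nhds (by simp)
  | insert b s hb ih =>
    have hsmul := (uniformContinuous_const_smul (c b)).comp_tendstoUniformly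
      (hf b (mem_insert_self b s))
    have hadd := hsmul.add (ih fun b' hb' ↦ hf b' (mem_insert_of_mem hb'))
    convert hadd using 1
    · funext n x
      simp [sum_insert hb]
    · simp

/- Averaging `n` times along `e b` divides the second difference `Δ_[w] (Δ_[e b] F)` by `n`;
averages in other directions do not spoil this gain because translations commute. -/
theorem exists_averaged_approx {β : Type*} (e : β → X) {F : X → Y} {K : X → ℝ}
    (hF : ∀ w x, ‖Δ_[w] F x‖ ≤ K w) (S : Finset β) :
    ∃ G : ℕ → X → Y,
      (∀ n w B, (∀ x, ‖Δ_[w] F x‖ ≤ B) → ∀ x, ‖Δ_[w] (G n) x‖ ≤ B) ∧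
      (∀ b ∈ S, ∀ w, TendstoUniformly (fun n ↦ Δ_[w] (Δ_[e b] (G n))) 0 atTop) ∧
      ∀ n, ∃ C, ∀ x, ‖G n x - F x‖ ≤ C := by
  classical
  induction S using Finset.induction_on with
  | empty => exact ⟨fun _ ↦ F, fun _ _ _ h ↦ h, by simp, fun _ ↦ ⟨0, by simp⟩⟩
  | insert b S _ ih =>
    obtain ⟨G, hGdiff, hGmixed, hGclose⟩ := ih
    refine ⟨fun n ↦ birkhoffAverage ℝ (· + e b) (G n) (n + 1), fun n w B hB ↦ ?_,
      fun b' hb' w ↦ ?_, fun n ↦ ?_⟩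
    · rw [fwdDiff_birkhoffAverage]
      exact norm_birkhoffAverage_le _ (hGdiff n w B hB) _
    · rcases Finset.mem_insert.1 hb' with rfl | hb'
      · have hgain : Tendsto (fun n : ℕ ↦ ((n + 1 : ℕ) : ℝ)⁻¹ * (K w + K w)) atTop (𝓝 0) := by
          simpa using ((tendsto_add_atTop_iff_nat 1).2
            (tendsto_inv_atTop_nhds_zero_nat (𝕜 := ℝ))).mul_const (K w + K w)
        refine tendstoUniformly_zero_of_norm_le hgain fun n x ↦ ?_
        rw [fwdDiff_birkhoffAverage_self, fwdDiff_const_smul, fwdDiff_comm, Pi.smul_apply,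
          norm_smul, norm_inv, Real.norm_natCast]
        gcongr
        exact norm_sub_le_of_le (hGdiff n w _ (hF w) _) (hGdiff n w _ (hF w) _)
      · simpa only [fwdDiff_birkhoffAverage] using
          tendstoUniformly_birkhoffAverage_zero (hGmixed b' hb' w) (e b) (· + 1)
    · obtain ⟨C, hC⟩ := hGclose n
      refine ⟨_, fun x ↦ norm_sub_le_norm_sub_add_norm_sub _ (G n x) _ |>.trans
        (add_le_add (norm_birkhoffAverage_translate_sub_le
          (fun k ↦ hGdiff n (k • e b) _ (hF _)) n.succ_ne_zero x) (hC x))⟩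

/-- The error made when the increment of `F` along the lattice vector `w` is replaced by the
linear combination, with the coordinates of `w` as coefficients, of its increments along the
standard basis. -/
noncomputable def linearDefect {β : Type*} [Fintype β] [DecidableEq β] (F : (β → ℤ) → Y)
    (w : β → ℤ) : (β → ℤ) → Y :=
  Δ_[w] F - ∑ b, (w b : ℝ) • Δ_[Pi.single b 1] F

lemma linearDefect_add {β : Type*} [Fintype β] [DecidableEq β] (F : (β → ℤ) → Y)
    (v w x : β → ℤ) :
    linearDefect F (v + w) x = linearDefect F v x + linearDefect F w (x + v) +
      ∑ b, (w b : ℝ) • Δ_[v] (Δ_[Pi.single b 1] F) x := by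
  simp only [linearDefect, Pi.sub_apply, Finset.sum_apply, Pi.smul_apply, Pi.add_apply,
    Int.cast_add, add_smul, sum_add_distrib, fwdDiff, smul_sub, sum_sub_distrib, ← add_assoc]
  abel

lemma linearDefect_zero {β : Type*} [Fintype β] [DecidableEq β] (F : (β → ℤ) → Y) :
    linearDefect F 0 = 0 := by
  funext x
  simp [linearDefect, fwdDiff]

lemma linearDefect_single {β : Type*} [Fintype β] [DecidableEq β] (F : (β → ℤ) → Y) (b : β) :
    linearDefect F (Pi.single b 1) = 0 := by
  funext x
  simp [linearDefect, Pi.single_apply]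

lemma linearDefect_neg {β : Type*} [Fintype β] [DecidableEq β] (F : (β → ℤ) → Y)
    (w x : β → ℤ) :
    linearDefect F (-w) x = -(linearDefect F w (x - w) +
      ∑ b, ((-w) b : ℝ) • Δ_[w] (Δ_[Pi.single b 1] F) (x - w)) := by
  have hadd := linearDefect_add F w (-w) (x - w)
  rw [add_neg_cancel, sub_add_cancel, linearDefect_zero, Pi.zero_apply, add_right_comm] at hadd
  exact eq_neg_of_add_eq_zero_right hadd.symm

theorem tendstoUniformly_linearDefect {β : Type*} [Fintype β] [DecidableEq β]
    {G : ℕ → (β → ℤ) → Y}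
    (hG : ∀ b w, TendstoUniformly (fun n ↦ Δ_[w] (Δ_[Pi.single b 1] (G n))) 0 atTop)
    (w : β → ℤ) : TendstoUniformly (fun n ↦ linearDefect (G n) w) 0 atTop := by
  have hmixed (v w : β → ℤ) : TendstoUniformly
      (fun n x ↦ ∑ b, (w b : ℝ) • Δ_[v] (Δ_[Pi.single b 1] (G n)) x) 0 atTop :=
    tendstoUniformly_sum_smul univ _ fun b _ ↦ hG b v
  let linearDirections : AddSubgroup (β → ℤ) :=
    { carrier := {w | TendstoUniformly (fun n ↦ linearDefect (G n) w) 0 atTop}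
      zero_mem' := by
        simpa [linearDefect_zero] using
          tendstoUniformly_zero_of_norm_le tendsto_const_nhds (by simp)
      add_mem' := fun {v w} hv hw ↦ by
        have hadd := (TendstoUniformly.add hv (TendstoUniformly.comp hw (· + v))).add (hmixed v w)
        change TendstoUniformly _ _ _
        convert hadd using 1
        · funext n x
          exact linearDefect_add (G n) v w x
        · simp
      neg_mem' := fun {w} hw ↦ by
        have hneg := (TendstoUniformly.add hw (hmixed w (-w))).neg.comp (· - w)
        change TendstoUniformly _ _ _
        convert hneg using 1
        · funext n x
          exact linearDefect_neg (G n) w x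
        · simp }
  refine AddSubgroup.pi_mem_of_single_mem (H := linearDirections) w fun b ↦ ?_
  have hsingle : (Pi.single b (w b) : β → ℤ) = w b • Pi.single b 1 := by
    rw [← Pi.single_smul, smul_eq_mul, mul_one]
  rw [hsingle]
  refine zsmul_mem (show TendstoUniformly _ _ _ from ?_) _
  simpa [linearDefect_single] using
    tendstoUniformly_zero_of_norm_le tendsto_const_nhds (by simp)

theorem sum_le_of_le_birkhoffAverage {I : Type*} {n : ℕ} (hn : n ≠ 0) (w : I → X) (a : I → ℝ)
    (S : Finset I) {φ : I → X → ℝ} {M : ℝ}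
    (ha : ∀ i ∈ S, ∀ x, a i ≤ birkhoffAverage ℝ (· + w i) (φ i) n x)
    (hM : ∀ x, ∑ i ∈ S, φ i x ≤ M) : ∑ i ∈ S, a i ≤ M := by
  classical
  induction S using Finset.induction_on generalizing φ M with
  | empty => simpa using hM 0
  | insert j S hj ih =>
    rw [sum_insert hj, ← le_sub_iff_add_le']
    refine ih (φ := fun i ↦ birkhoffAverage ℝ (· + w j) (φ i) n) (fun i hi x ↦ ?_) fun x ↦ ?_
    · have hmono := birkhoffAverage_mono (· + w j) (φ := fun _ ↦ a i)
        (ha i (mem_insert_of_mem hi)) n x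
      rwa [birkhoffAverage_const _ _ hn, birkhoffAverage_translate_comm] at hmono
    · have hmono := birkhoffAverage_mono (· + w j) hM n x
      have hsplit : birkhoffAverage ℝ (· + w j) (fun x ↦ ∑ i ∈ insert j S, φ i x) n x =
          birkhoffAverage ℝ (· + w j) (φ j) n x +
            ∑ i ∈ S, birkhoffAverage ℝ (· + w j) (φ i) n x := by
        simp only [birkhoffAverage, birkhoffSum, sum_insert hj, sum_add_distrib, smul_add,
          sum_comm (s := range n), smul_sum]
      rw [birkhoffAverage_const _ _ hn, hsplit] at hmono
      linarith [ha j (mem_insert_self j S) x]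

end Averaging

section Transfer

variable {X Y : Type*} [AddCommGroup X] [NormedAddCommGroup Y]

lemma sum_mul_le_of_norm_sub_le {I : Type*} [Fintype I] {F G : X → Y} {C M : ℝ} {w : I → X}
    {p A : I → ℝ} (hp : ∀ i, 0 ≤ p i) (hGF : ∀ x, ‖G x - F x‖ ≤ C)
    (hA : ∀ i x (n : ℕ), n * A i ≤ ‖Δ_[n • w i] F x‖)
    (hM : ∀ x, ∑ i, p i * ‖Δ_[w i] G x‖ ≤ M) : ∑ i, p i * A i ≤ M := by
  have hbound (n : ℕ) (hn : n ≠ 0) : ∑ i, p i * (A i - 2 * C / n) ≤ M := by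
    refine sum_le_of_le_birkhoffAverage hn w _ univ (fun i _ x ↦ ?_) hM
    have hFG : ‖Δ_[n • w i] F x‖ ≤ ‖Δ_[n • w i] G x‖ + 2 * C := by
      have hsplit : Δ_[n • w i] F x =
          Δ_[n • w i] G x - (G (x + n • w i) - F (x + n • w i)) + (G x - F x) := by
        simp only [fwdDiff]; abel
      rw [hsplit]
      linarith [norm_add_le (Δ_[n • w i] G x - (G (x + n • w i) - F (x + n • w i))) (G x - F x),
        norm_sub_le (Δ_[n • w i] G x) (G (x + n • w i) - F (x + n • w i)), hGF x,
        hGF (x + n • w i)]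
    have hn' : (0 : ℝ) < n := by positivity
    have hlower : A i - 2 * C / n ≤
        birkhoffAverage ℝ (· + w i) (fun x ↦ ‖Δ_[w i] G x‖) n x := by
      rw [birkhoffAverage, smul_eq_mul, le_inv_mul_iff₀ hn', mul_sub, mul_div_cancel₀ _ hn'.ne']
      linarith [hA i x n, norm_fwdDiff_nsmul_le (w i) G n x]
    refine (mul_le_mul_of_nonneg_left hlower (hp i)).trans_eq ?_
    simp only [birkhoffAverage, birkhoffSum, smul_eq_mul, mul_left_comm, mul_sum]
  have hlim : Tendsto (fun n : ℕ ↦ ∑ i, p i * (A i - 2 * C / n)) atTop (𝓝 (∑ i, p i * A i)) :=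
    tendsto_finsetSum _ fun i _ ↦ by
      simpa using ((tendsto_const_div_atTop_nhds_zero_nat (2 * C)).const_sub (A i)).const_mul (p i)
  exact le_of_tendsto hlim ((eventually_ne_atTop 0).mono hbound)

lemma sum_mul_norm_fwdDiff_le_of_linearDefect [NormedSpace ℝ Y] {β I J : Type*} [Fintype β]
    [DecidableEq β] [Fintype I] [Fintype J] {G : (β → ℤ) → Y} {w : I → β → ℤ} {u : J → β → ℤ}
    {p : I → ℝ} {q : J → ℝ} (hp : ∀ i, 0 ≤ p i) (hq : ∀ j, 0 ≤ q j)
    (hlin : ∀ T : β → Y,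
      ∑ i, p i * ‖∑ b, (w i b : ℝ) • T b‖ ≤ ∑ j, q j * ‖∑ b, (u j b : ℝ) • T b‖)
    {ε : ℝ} {x : β → ℤ} (hw : ∀ i, ‖linearDefect G (w i) x‖ ≤ ε)
    (hu : ∀ j, ‖linearDefect G (u j) x‖ ≤ ε) :
    ∑ i, p i * ‖Δ_[w i] G x‖ ≤
      ∑ j, q j * ‖Δ_[u j] G x‖ + ε * (∑ i, p i + ∑ j, q j) := by
  let T (b : β) : Y := Δ_[Pi.single b 1] G x
  have hle (v : β → ℤ) (hv : ‖linearDefect G v x‖ ≤ ε) :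
      |‖Δ_[v] G x‖ - ‖∑ b, (v b : ℝ) • T b‖| ≤ ε :=
    (abs_norm_sub_norm_le _ _).trans (le_of_eq_of_le (by simp [linearDefect, T]) hv)
  calc ∑ i, p i * ‖Δ_[w i] G x‖ ≤ ∑ i, p i * (‖∑ b, (w i b : ℝ) • T b‖ + ε) := by
        gcongr with i
        · exact hp i
        · linarith [(abs_le.1 (hle (w i) (hw i))).2]
    _ ≤ ∑ j, q j * ‖∑ b, (u j b : ℝ) • T b‖ + ε * ∑ i, p i := by
        simpa only [mul_add, sum_add_distrib, ← sum_mul, mul_comm ε, add_le_add_iff_right] using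
          hlin T
    _ ≤ ∑ j, q j * (‖Δ_[u j] G x‖ + ε) + ε * ∑ i, p i := by
        gcongr with j
        · exact hq j
        · linarith [(abs_le.1 (hle (u j) (hu j))).1]
    _ = ∑ j, q j * ‖Δ_[u j] G x‖ + ε * (∑ i, p i + ∑ j, q j) := by
        simp only [mul_add, sum_add_distrib, ← sum_mul]
        ring

theorem sum_mul_le_sum_mul_of_forall_linear [NormedSpace ℝ Y] {β I J : Type*} [Fintype β]
    [Fintype I] [Fintype J] {F : (β → ℤ) → Y} {K : (β → ℤ) → ℝ} {w : I → β → ℤ} {u : J → β → ℤ}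
    {p A : I → ℝ} {q B : J → ℝ} (hp : ∀ i, 0 ≤ p i) (hq : ∀ j, 0 ≤ q j)
    (hlin : ∀ T : β → Y,
      ∑ i, p i * ‖∑ b, (w i b : ℝ) • T b‖ ≤ ∑ j, q j * ‖∑ b, (u j b : ℝ) • T b‖)
    (hF : ∀ v x, ‖Δ_[v] F x‖ ≤ K v) (hA : ∀ i x (n : ℕ), n * A i ≤ ‖Δ_[n • w i] F x‖)
    (hB : ∀ j x, ‖Δ_[u j] F x‖ ≤ B j) : ∑ i, p i * A i ≤ ∑ j, q j * B j := by
  classical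
  obtain ⟨G, hGdiff, hGmixed, hGclose⟩ :=
    exists_averaged_approx (fun b : β ↦ Pi.single b (1 : ℤ)) hF univ
  have hdefect := tendstoUniformly_linearDefect fun b v ↦ hGmixed b (mem_univ b) v
  have happrox (ε : ℝ) (hε : 0 < ε) :
      ∑ i, p i * A i ≤ ∑ j, q j * B j + ε * (∑ i, p i + ∑ j, q j) := by
    have hsmall (v : β → ℤ) : ∀ᶠ n in atTop, ∀ x, ‖linearDefect (G n) v x‖ < ε := by
      simpa using Metric.tendstoUniformly_iff.1 (hdefect v) ε hε
    obtain ⟨n, hw, hu⟩ := ((eventually_all.2 fun i ↦ hsmall (w i)).and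
      (eventually_all.2 fun j ↦ hsmall (u j))).exists
    obtain ⟨C, hC⟩ := hGclose n
    refine sum_mul_le_of_norm_sub_le hp hC hA fun x ↦ ?_
    refine (sum_mul_norm_fwdDiff_le_of_linearDefect hp hq hlin (fun i ↦ (hw i x).le)
      fun j ↦ (hu j x).le).trans ?_
    gcongr with j
    exacts [hq j, hGdiff n (u j) _ (hB j) x]
  have hlim : Tendsto (fun ε : ℝ ↦ ∑ j, q j * B j + ε * (∑ i, p i + ∑ j, q j)) (𝓝[>] 0)
      (𝓝 (∑ j, q j * B j)) := by
    refine tendsto_nhdsWithin_of_tendsto_nhds ?_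
    exact Continuous.tendsto' (by fun_prop) _ _ (by simp)
  exact ge_of_tendsto hlim (eventually_nhdsWithin_of_forall happrox)

end Transfer

lemma L1_norm_sum_smul {Ω β : Type*} [MeasurableSpace Ω] {ν : Measure Ω} [Fintype β]
    (c : β → ℝ) (T : β → Lp ℝ 1 ν) : ‖∑ b, c b • T b‖ = ∫ ω, |∑ b, c b * T b ω| ∂ν := by
  rw [L1.norm_eq_integral_norm]
  refine integral_congr_ae ?_
  filter_upwards [Lp.coeFn_finsetSum univ fun b ↦ c b • T b,
    eventually_countable_forall.2 fun b ↦ Lp.coeFn_smul (c b) (T b)] with ω hsum hsmul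
  rw [hsum, Finset.sum_apply, Real.norm_eq_abs]
  simp only [hsmul, Pi.smul_apply, smul_eq_mul]

theorem L1_sum_norm_le_of_forall_real {Ω β I J : Type*} [MeasurableSpace Ω] {ν : Measure Ω}
    [Fintype β] [Fintype I] [Fintype J] {w : I → β → ℝ} {u : J → β → ℝ} {p : I → ℝ} {q : J → ℝ}
    (hlin : ∀ φ : β → ℝ, ∑ i, p i * |∑ b, w i b * φ b| ≤ ∑ j, q j * |∑ b, u j b * φ b|)
    (T : β → Lp ℝ 1 ν) :
    ∑ i, p i * ‖∑ b, w i b • T b‖ ≤ ∑ j, q j * ‖∑ b, u j b • T b‖ := by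
  have hint (c : β → ℝ) : Integrable (fun ω ↦ |∑ b, c b * T b ω|) ν :=
    (integrable_finsetSum _ fun b _ ↦ (L1.integrable_coeFn (T b)).const_mul (c b)).abs
  simp only [L1_norm_sum_smul, ← integral_const_mul]
  rw [← integral_finsetSum _ fun i _ ↦ (hint (w i)).const_mul (p i),
    ← integral_finsetSum _ fun j _ ↦ (hint (u j)).const_mul (q j)]
  exact integral_mono (integrable_finsetSum _ fun i _ ↦ (hint (w i)).const_mul (p i))
    (integrable_finsetSum _ fun j _ ↦ (hint (u j)).const_mul (q j)) fun ω ↦ hlin fun b ↦ T b ω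

section Cuts

lemma exists_top_layer {V : Type*} [Fintype V] {φ : V → ℝ} (hφ : 1 < #(univ.image φ)) :
    ∃ (ψ : V → ℝ) (δ : ℝ) (S : Set V), 0 ≤ δ ∧ #(univ.image ψ) < #(univ.image φ) ∧
      φ = ψ + δ • S.indicator 1 ∧
      ∀ x y, |φ x - φ y| = |ψ x - ψ y| + δ * |S.indicator 1 x - S.indicator 1 y| := by
  classical
  have hne : (univ.image φ).Nonempty := card_pos.1 (zero_lt_one.trans hφ)
  set M := (univ.image φ).max' hne
  have hne' : ((univ.image φ).erase M).Nonempty :=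
    (erase_nonempty (max'_mem _ _)).2 (one_lt_card_iff_nontrivial.1 hφ)
  set m := ((univ.image φ).erase M).max' hne'
  have hmM : m ≤ M := le_max' _ _ (mem_of_mem_erase (max'_mem _ _))
  have hcases (x : V) : φ x = M ∨ φ x ≠ M ∧ φ x ≤ m := by
    rcases eq_or_ne (φ x) M with hx | hx
    · exact .inl hx
    · exact .inr ⟨hx, le_max' _ _ (mem_erase.2 ⟨hx, mem_image_of_mem φ (mem_univ x)⟩)⟩
  refine ⟨fun x ↦ min (φ x) m, M - m, {x | φ x = M}, sub_nonneg.2 hmM, ?_, ?_, fun x y ↦ ?_⟩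
  · refine (card_le_card (image_subset_iff.2 fun x _ ↦ ?_)).trans_lt
      (card_erase_lt_of_mem (max'_mem _ hne))
    rcases hcases x with hx | ⟨hx, hxm⟩
    · rw [hx, min_eq_right hmM]
      exact max'_mem _ _
    · rw [min_eq_left hxm]
      exact mem_erase.2 ⟨hx, mem_image_of_mem φ (mem_univ x)⟩
  · funext x
    rcases hcases x with hx | ⟨hx, hxm⟩ <;> simp [*]
  · rcases hcases x with hx | ⟨hx, hxm⟩ <;> rcases hcases y with hy | ⟨hy, hym⟩
    · simp [hx, hy]
    · simp [*, abs_of_nonneg (sub_nonneg.2 hym), abs_of_nonneg (sub_nonneg.2 (hym.trans hmM))]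
    · simp [*, abs_of_nonpos (sub_nonpos.2 hxm), abs_of_nonpos (sub_nonpos.2 (hxm.trans hmM))]
    · simp [*]

theorem seminorm_le_sum_abs_of_forall_indicator {V J : Type*} [Finite V] [Fintype J]
    (N : Seminorm ℝ (V → ℝ)) (hN : N 1 = 0) {q : J → ℝ} {a b : J → V}
    (hcut : ∀ S : Set V,
      N (S.indicator 1) ≤ ∑ j, q j * |S.indicator 1 (a j) - S.indicator 1 (b j)|)
    (φ : V → ℝ) : N φ ≤ ∑ j, q j * |φ (a j) - φ (b j)| := by
  have := Fintype.ofFinite V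
  induction hk : #(univ.image φ) using Nat.strong_induction_on generalizing φ with
  | h k ih =>
    rcases le_or_gt #(univ.image φ) 1 with hφ | hφ
    · have hconst (x y : V) : φ x = φ y :=
        card_le_one.1 hφ _ (mem_image_of_mem φ (mem_univ x)) _ (mem_image_of_mem φ (mem_univ y))
      obtain ⟨c, rfl⟩ : ∃ c : ℝ, φ = c • 1 := by
        rcases isEmpty_or_nonempty V with _ | ⟨⟨z⟩⟩
        · exact ⟨0, Subsingleton.elim _ _⟩
        · exact ⟨φ z, funext fun x ↦ by simp [hconst x z]⟩
      simp [map_smul_eq_mul, hN]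
    · obtain ⟨ψ, δ, S, hδ, hcard, rfl, habs⟩ := exists_top_layer hφ
      calc N (ψ + δ • S.indicator 1) ≤ N ψ + δ * N (S.indicator 1) := by
            exact (map_add_le_add N ψ _).trans_eq
              (by rw [map_smul_eq_mul, Real.norm_of_nonneg hδ])
        _ ≤ ∑ j, q j * |ψ (a j) - ψ (b j)| +
              δ * ∑ j, q j * |S.indicator 1 (a j) - S.indicator 1 (b j)| := by
            gcongr
            · exact ih _ (hk ▸ hcard) ψ rfl
            · exact hcut S
        _ = _ := by
            rw [mul_sum, ← sum_add_distrib]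
            exact sum_congr rfl fun j _ ↦ by rw [habs]; ring

end Cuts

section GeometricSum

lemma sum_half_pow_mul_sqrt_le_of_one_le {x : ℕ → ℝ} {X : ℝ} (hX : 1 ≤ X)
    (hx : ∀ j, x j * (1 / 2) ^ j ≤ X) (n : ℕ) :
    ∑ j ∈ range n, (1 / 2) ^ j * √(x j) ≤ 2 * X / (2 - √2) := by
  have hlt : √2 / 2 < 1 := by nlinarith [Real.sq_sqrt zero_le_two, Real.sqrt_nonneg 2]
  have hterm (j : ℕ) : (1 / 2) ^ j * √(x j) ≤ X * (√2 / 2) ^ j := by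
    have hpow : ((√2 / 2) ^ j) ^ 2 = (1 / 2 : ℝ) ^ j := by
      rw [← pow_mul, mul_comm, pow_mul, div_pow, Real.sq_sqrt zero_le_two]
      norm_num
    have hle : x j ≤ (X * (√2 / 2) ^ j / (1 / 2) ^ j) ^ 2 := by
      rw [div_pow, mul_pow, hpow, sq ((1 / 2 : ℝ) ^ j), mul_div_mul_right _ _ (by positivity),
        le_div_iff₀ (by positivity)]
      exact (hx j).trans (by nlinarith)
    rw [mul_comm, ← le_div_iff₀ (by positivity)]
    exact (Real.sqrt_le_sqrt hle).trans_eq (Real.sqrt_sq (by positivity))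
  calc ∑ j ∈ range n, (1 / 2) ^ j * √(x j)
      ≤ X * ∑ j ∈ range n, (√2 / 2) ^ j := by
        rw [mul_sum]
        exact sum_le_sum fun j _ ↦ hterm j
    _ ≤ X * (1 - √2 / 2)⁻¹ := by
        rw [← tsum_geometric_of_lt_one (by positivity) hlt]
        gcongr
        exact (summable_geometric_of_lt_one (by positivity) hlt).sum_le_tsum _
          fun _ _ ↦ by positivity
    _ = 2 * X / (2 - √2) := by
        rw [one_sub_div two_ne_zero, inv_div]
        ring

theorem sum_half_pow_mul_sqrt_natCast_le (n : ℕ) {N : ℕ → ℕ} {X : ℝ}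
    (hN : ∀ j, N j * (1 / 2) ^ j ≤ X) :
    ∑ j ∈ range n, (1 / 2) ^ j * √(N j) ≤ 2 * X / (2 - √2) := by
  induction n generalizing N X with
  | zero =>
    have hX : 0 ≤ X := le_trans (by positivity) (hN 0)
    have hden : 0 ≤ 2 - √2 := by nlinarith [Real.sq_sqrt zero_le_two, Real.sqrt_nonneg 2]
    simpa using by positivity
  | succ n ih =>
    rcases Nat.eq_zero_or_pos (N 0) with h0 | h0
    · have hshift := ih (N := fun j ↦ N (j + 1)) (X := 2 * X) fun j ↦ by
        have := hN (j + 1)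
        rw [pow_succ] at this
        linarith
      calc ∑ j ∈ range (n + 1), (1 / 2) ^ j * √(N j)
          = 1 / 2 * ∑ j ∈ range n, (1 / 2) ^ j * √(N (j + 1)) := by
            simp only [sum_range_succ', h0, Nat.cast_zero, Real.sqrt_zero, mul_zero, add_zero,
              mul_sum, pow_succ', mul_assoc]
        _ ≤ 1 / 2 * (2 * (2 * X) / (2 - √2)) := by gcongr
        _ = 2 * X / (2 - √2) := by ring
    · have hX : 1 ≤ X := (Nat.one_le_cast.2 h0).trans (by simpa using hN 0)
      exact sum_half_pow_mul_sqrt_le_of_one_le hX hN (n + 1)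

end GeometricSum

section RandomSigns

lemma sum_units_mul_eq_ite {I : Type*} [Fintype I] [DecidableEq I] (c d : I) :
    ∑ ε : I → ℤˣ, ((ε c : ℤ) : ℝ) * (ε d : ℤ) = if c = d then 2 ^ Fintype.card I else 0 := by
  split_ifs with hcd
  · subst hcd
    have hsq (ε : I → ℤˣ) : ((ε c : ℤ) : ℝ) * (ε c : ℤ) = 1 := by
      rw [← Int.cast_mul, Int.units_coe_mul_self, Int.cast_one]
    simp [hsq]
  · have hflip : ∑ ε : I → ℤˣ, ((ε c : ℤ) : ℝ) * (ε d : ℤ) =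
        ∑ ε : I → ℤˣ, -(((ε c : ℤ) : ℝ) * (ε d : ℤ)) :=
      Fintype.sum_equiv (Equiv.mulRight (Pi.mulSingle c (-1))) _ _ fun ε ↦ by
        simp [Pi.mulSingle_eq_of_ne (Ne.symm hcd)]
    rw [sum_neg_distrib] at hflip
    linarith

lemma sum_units_sq {I : Type*} [Fintype I] [DecidableEq I] (s : Finset I) (x : I → ℝ) :
    ∑ ε : I → ℤˣ, (∑ c ∈ s, ((ε c : ℤ) : ℝ) * x c) ^ 2 =
      2 ^ Fintype.card I * ∑ c ∈ s, x c ^ 2 := by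
  calc ∑ ε : I → ℤˣ, (∑ c ∈ s, ((ε c : ℤ) : ℝ) * x c) ^ 2
      = ∑ c ∈ s, ∑ d ∈ s, x c * x d * ∑ ε : I → ℤˣ, ((ε c : ℤ) : ℝ) * (ε d : ℤ) := by
        simp only [sq, sum_mul_sum]
        simp only [mul_sum]
        rw [sum_comm]
        refine sum_congr rfl fun c _ ↦ ?_
        rw [sum_comm]
        exact sum_congr rfl fun d _ ↦ sum_congr rfl fun ε _ ↦ by ring
    _ = 2 ^ Fintype.card I * ∑ c ∈ s, x c ^ 2 := by
        rw [mul_sum]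
        refine sum_congr rfl fun c hc ↦ ?_
        simp only [sum_units_mul_eq_ite, mul_ite, mul_zero, sum_ite_eq, if_pos hc]
        ring

lemma sum_units_abs_le {I : Type*} [Fintype I] [DecidableEq I] (s : Finset I) (x : I → ℝ) :
    ∑ ε : I → ℤˣ, |∑ c ∈ s, ((ε c : ℤ) : ℝ) * x c| ≤
      2 ^ Fintype.card I * √(∑ c ∈ s, x c ^ 2) := by
  refine le_of_sq_le_sq ?_ (by positivity)
  have hcs := sq_sum_le_card_mul_sum_sq (s := (univ : Finset (I → ℤˣ)))
    (f := fun ε ↦ |∑ c ∈ s, ((ε c : ℤ) : ℝ) * x c|)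
  have hcard : (#(univ : Finset (I → ℤˣ)) : ℝ) = 2 ^ Fintype.card I := by simp
  simp only [sq_abs, sum_units_sq, hcard] at hcs
  rw [mul_pow, Real.sq_sqrt (by positivity)]
  linarith

theorem sum_half_pow_mul_average_units_abs_le {I : Type*} [Fintype I] [DecidableEq I]
    {scale : I → ℕ} {x : I → ℝ} (hx : ∀ c, x c = 0 ∨ |x c| = 1) {W : ℝ}
    (hW : ∀ k, ∑ c with scale c = k, (1 / 2) ^ k * |x c| ≤ W) (n : ℕ) :
    ∑ k ∈ range n, (1 / 2) ^ k * ((2 ^ Fintype.card I)⁻¹ *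
      ∑ ε : I → ℤˣ, |∑ c with scale c = k, ((ε c : ℤ) : ℝ) * x c|) ≤ 2 * W / (2 - √2) := by
  set N : ℕ → ℕ := fun k ↦ #{c | scale c = k ∧ x c ≠ 0}
  have hsq (k : ℕ) : ∑ c with scale c = k, x c ^ 2 = N k := by
    simp only [N, ← filter_filter, card_filter _ (filter _ univ), Nat.cast_sum]
    refine sum_congr rfl fun c _ ↦ ?_
    rcases hx c with h | h
    · simp [h]
    · simp [← sq_abs (x c), h, ← abs_ne_zero (a := x c)]
  have habs (k : ℕ) : ∑ c with scale c = k, (1 / 2) ^ k * |x c| = N k * (1 / 2) ^ k := by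
    rw [← mul_sum, ← hsq, mul_comm]
    refine congrArg (· * _) (sum_congr rfl fun c _ ↦ ?_)
    rcases hx c with h | h
    · simp [h]
    · rw [← sq_abs, h, one_pow]
  refine (sum_le_sum fun k _ ↦ ?_).trans
    (sum_half_pow_mul_sqrt_natCast_le n fun k ↦ (habs k).symm.trans_le (hW k))
  have hle := sum_units_abs_le {c | scale c = k} x
  rw [hsq, ← div_le_iff₀' (by positivity), div_eq_inv_mul] at hle
  gcongr

end RandomSigns

namespace WGraph

variable {G : WGraph}

/-- Connectedness of the underlying undirected graph. -/
def IsConnected (G : WGraph) : Prop :=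
  ∀ x y : G.V, ∃ l, G.IsWalk x y l

lemma IsConnected.of_forall_iff
    (h : ∀ P : G.V → Prop, (∀ e, P (G.src e) ↔ P (G.dst e)) → ∀ x y, P y → P x) :
    G.IsConnected := fun x y ↦
  h (fun z ↦ ∃ l, G.IsWalk z y l)
    (fun e ↦ ⟨fun ⟨l, hl⟩ ↦ ⟨(e, false) :: l, rfl, hl⟩, fun ⟨l, hl⟩ ↦ ⟨(e, true) :: l, rfl, hl⟩⟩)
    x y ⟨[], rfl⟩

lemma IsConnected.forall_iff (hG : G.IsConnected) {P : G.V → Prop}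
    (hP : ∀ e, P (G.src e) ↔ P (G.dst e)) (x y : G.V) : P x ↔ P y := by
  obtain ⟨l, hl⟩ := hG x y
  induction l generalizing x with
  | nil => rw [show x = y from hl]
  | cons p l ih =>
    obtain ⟨rfl, hl⟩ := hl
    refine Iff.trans ?_ (ih _ hl)
    rcases p with ⟨e, _ | _⟩
    exacts [(hP e).symm, hP e]

/-- A potential on the vertices which changes by at most the length along every edge; this is the
`1`-Lipschitz condition for `G.gdist`. -/
def IsLip (G : WGraph) (g : G.V → ℝ) : Prop :=
  ∀ e, |g (G.src e) - g (G.dst e)| ≤ G.len e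

lemma IsLip.sub_le_of_isWalk {g : G.V → ℝ} (hg : G.IsLip g) {x y : G.V} {l : List (G.ι × Bool)}
    (hl : G.IsWalk x y l) : g x - g y ≤ (l.map fun p ↦ G.len p.1).sum := by
  induction l generalizing x with
  | nil => simp [show x = y from hl]
  | cons p l ih =>
    obtain ⟨rfl, hl⟩ := hl
    have hstep : g (G.stepSrc p) - g (G.stepDst p) ≤ G.len p.1 := by
      rcases p with ⟨e, _ | _⟩
      exacts [(le_abs_self _).trans ((abs_sub_comm _ _).trans_le (hg e)),
        (le_abs_self _).trans (hg e)]
    rw [List.map_cons, List.sum_cons]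
    linarith [ih hl]

lemma IsLip.sub_le_gdist {g : G.V → ℝ} (hg : G.IsLip g) (hG : G.IsConnected) (x y : G.V) :
    g x - g y ≤ G.gdist x y := by
  obtain ⟨l, hl⟩ := hG x y
  refine le_csInf ⟨_, l, hl, rfl⟩ ?_
  rintro _ ⟨l, hl, rfl⟩
  exact hg.sub_le_of_isWalk hl

lemma gdist_nonneg (hlen : ∀ e, 0 ≤ G.len e) (x y : G.V) : 0 ≤ G.gdist x y := by
  refine Real.sInf_nonneg ?_
  rintro _ ⟨l, -, rfl⟩
  exact List.sum_nonneg (List.forall_mem_map.2 fun p _ ↦ hlen p.1)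

lemma gdist_le_of_isWalk (hlen : ∀ e, 0 ≤ G.len e) {x y : G.V} {l : List (G.ι × Bool)}
    (hl : G.IsWalk x y l) : G.gdist x y ≤ (l.map fun p ↦ G.len p.1).sum := by
  refine csInf_le ⟨0, ?_⟩ ⟨l, hl, rfl⟩
  rintro _ ⟨l, -, rfl⟩
  exact List.sum_nonneg (List.forall_mem_map.2 fun p _ ↦ hlen p.1)

lemma gdist_self (hlen : ∀ e, 0 ≤ G.len e) (x : G.V) : G.gdist x x = 0 :=
  le_antisymm (gdist_le_of_isWalk (l := []) hlen rfl) (gdist_nonneg hlen x x)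

lemma gdist_src_dst_le (hlen : ∀ e, 0 ≤ G.len e) (e : G.ι) :
    G.gdist (G.src e) (G.dst e) ≤ G.len e :=
  (gdist_le_of_isWalk (l := [(e, true)]) hlen ⟨rfl, rfl⟩).trans_eq (by simp)

lemma gdist_stepSrc_le (hlen : ∀ e, 0 ≤ G.len e) (hG : G.IsConnected) (p : G.ι × Bool) (z : G.V) :
    G.gdist (G.stepSrc p) z ≤ G.len p.1 + G.gdist (G.stepDst p) z := by
  rw [← sub_le_iff_le_add']
  obtain ⟨l, hl⟩ := hG (G.stepDst p) z
  refine le_csInf ⟨_, l, hl, rfl⟩ ?_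
  rintro _ ⟨l, hl, rfl⟩
  rw [sub_le_iff_le_add']
  exact gdist_le_of_isWalk (l := p :: l) hlen ⟨rfl, hl⟩

lemma isLip_gdist (hlen : ∀ e, 0 ≤ G.len e) (hG : G.IsConnected) (z : G.V) :
    G.IsLip (G.gdist · z) := fun e ↦
  abs_sub_le_iff.2 ⟨sub_le_iff_le_add.2 (gdist_stepSrc_le hlen hG (e, true) z),
    sub_le_iff_le_add.2 (gdist_stepSrc_le hlen hG (e, false) z)⟩

lemma exists_pos_forall_le_gdist (hlen : ∀ e, 0 < G.len e) (hG : G.IsConnected) :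
    ∃ m > 0, ∀ x y, x ≠ y → m ≤ G.gdist x y := by
  obtain ⟨m, hm, hmlen⟩ : ∃ m > 0, ∀ e, m ≤ G.len e := by
    rcases isEmpty_or_nonempty G.ι with _ | _
    · exact ⟨1, one_pos, isEmptyElim⟩
    · obtain ⟨e, he⟩ := Finite.exists_min G.len
      exact ⟨G.len e, hlen e, he⟩
  refine ⟨m, hm, fun x y hxy ↦ ?_⟩
  have hlip : G.IsLip fun z ↦ if z = x then m else 0 := fun e ↦ by
    refine le_trans ?_ (hmlen e)
    dsimp only
    split_ifs <;> simp [abs_of_pos hm, hm.le]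
  simpa [hxy.symm] using hlip.sub_le_gdist hG x y

/-- The variation of `φ` across an edge, weighted by the thickness of the edge. -/
def edgeVar (G : WGraph) (φ : G.V → ℝ) (e : G.ι) : ℝ :=
  G.th e * |φ (G.src e) - φ (G.dst e)|

lemma edgeVar_nonneg (hth : ∀ e, 0 ≤ G.th e) (φ : G.V → ℝ) (e : G.ι) : 0 ≤ G.edgeVar φ e :=
  mul_nonneg (hth e) (abs_nonneg _)

end WGraph

section TransportationCost

variable {V : Type*} [DecidableEq V] {d : V → V → ℝ} {μ : V → ℝ}

/-- The amounts `a i` transported from `x i` to `y i` form a transportation plan for the signed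
measure `μ`. The plans entering the definition of `TCnorm` are indexed by `Fin n`. -/
def IsTransportPlan {J : Type*} [Fintype J] (μ : V → ℝ) (a : J → ℝ) (x y : J → V) : Prop :=
  (∀ i, 0 ≤ a i) ∧
    ∀ z, μ z = ∑ i, a i * ((if x i = z then (1 : ℝ) else 0) - (if y i = z then (1 : ℝ) else 0))

namespace IsTransportPlan

variable {J : Type*} [Fintype J] {a : J → ℝ} {x y : J → V}

lemma comp_equiv {J' : Type*} [Fintype J'] (h : IsTransportPlan μ a x y) (e : J' ≃ J) :
    IsTransportPlan μ (a ∘ e) (x ∘ e) (y ∘ e) :=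
  ⟨fun i ↦ h.1 (e i), fun z ↦ (h.2 z).trans (Fintype.sum_equiv e _ _ fun _ ↦ rfl).symm⟩

variable [Fintype V]

lemma TCnorm_le (h : IsTransportPlan μ a x y) (hd : ∀ x y, 0 ≤ d x y) :
    TCnorm d μ ≤ ∑ i, a i * d (x i) (y i) := by
  have h' := h.comp_equiv (Fintype.equivFin J).symm
  rw [← (Fintype.equivFin J).symm.sum_comp]
  refine csInf_le ⟨0, ?_⟩ ⟨_, _, _, _, h'.1, h'.2, rfl⟩
  rintro _ ⟨n, a, x, y, ha, -, rfl⟩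
  exact sum_nonneg fun i _ ↦ mul_nonneg (ha i) (hd _ _)

lemma sum_mul_eq (h : IsTransportPlan μ a x y) (g : V → ℝ) :
    ∑ z, μ z * g z = ∑ i, a i * (g (x i) - g (y i)) := by
  simp only [h.2, sum_mul, mul_assoc, sub_mul, ite_mul, one_mul, zero_mul]
  rw [sum_comm]
  simp only [← mul_sum, sum_sub_distrib, sum_ite_eq, mem_univ, if_true]

lemma through_base (hμ : ∑ z, μ z = 0) (o : V) :
    IsTransportPlan μ (Sum.elim (fun z ↦ (μ z)⁺) fun z ↦ (μ z)⁻)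
      (Sum.elim id fun _ ↦ o) (Sum.elim (fun _ ↦ o) id) := by
  refine ⟨Sum.rec (fun z ↦ posPart_nonneg _) fun z ↦ negPart_nonneg _, fun z ↦ ?_⟩
  have hsum : (∑ v, (μ v)⁺) - ∑ v, (μ v)⁻ = 0 := by
    simp only [← sum_sub_distrib, posPart_sub_negPart, hμ]
  rw [Fintype.sum_sum_type, ← posPart_sub_negPart (μ z)]
  change _ = ∑ v, (μ v)⁺ * ((if v = z then 1 else 0) - if o = z then 1 else 0) +
    ∑ v, (μ v)⁻ * ((if o = z then 1 else 0) - if v = z then 1 else 0)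
  simp only [mul_sub, sum_sub_distrib, mul_ite, mul_one, mul_zero, sum_ite_eq',
    mem_univ, if_true]
  split_ifs <;> linarith

end IsTransportPlan

variable [Fintype V]

lemma TCnorm_ite_sub_ite_le (hd : ∀ x y, 0 ≤ d x y) (x y : V) :
    TCnorm d (fun z ↦ (if x = z then 1 else 0) - (if y = z then 1 else 0)) ≤ d x y := by
  have h : IsTransportPlan (J := Unit) (fun z ↦ (if x = z then 1 else 0) - if y = z then 1 else 0)
      (fun _ ↦ 1) (fun _ ↦ x) (fun _ ↦ y) := ⟨fun _ ↦ zero_le_one, fun z ↦ by simp⟩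
  simpa using h.TCnorm_le hd

lemma TCnorm_le_mul_sum_abs [Nonempty V] (hd : ∀ x y, 0 ≤ d x y) {M : ℝ} (hM : ∀ x y, d x y ≤ M)
    (hμ : ∑ z, μ z = 0) : TCnorm d μ ≤ M * ∑ z, |μ z| := by
  refine ((IsTransportPlan.through_base hμ (Classical.arbitrary V)).TCnorm_le hd).trans ?_
  simp only [Fintype.sum_sum_type, Sum.elim_inl, Sum.elim_inr, id_eq, ← posPart_add_negPart,
    mul_comm M, sum_add_distrib, add_mul, sum_mul]
  refine add_le_add (sum_le_sum fun z _ ↦ ?_) (sum_le_sum fun z _ ↦ ?_)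
  exacts [mul_le_mul_of_nonneg_left (hM _ _) (posPart_nonneg _),
    mul_le_mul_of_nonneg_left (hM _ _) (negPart_nonneg _)]

theorem sum_mul_le_TCnorm [Nonempty V] {g : V → ℝ} (hg : ∀ x y, g x - g y ≤ d x y)
    (hμ : ∑ z, μ z = 0) : ∑ z, μ z * g z ≤ TCnorm d μ := by
  have hplan := (IsTransportPlan.through_base hμ (Classical.arbitrary V)).comp_equiv
    (Fintype.equivFin (V ⊕ V)).symm
  refine le_csInf ⟨_, _, _, _, _, hplan.1, hplan.2, rfl⟩ ?_
  rintro _ ⟨n, a, x, y, ha, hμ', rfl⟩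
  rw [IsTransportPlan.sum_mul_eq ⟨ha, hμ'⟩ g]
  gcongr with i
  exacts [ha i, hg _ _]

lemma mul_sum_abs_le_TCnorm [Nonempty V] (hd : ∀ x y, 0 ≤ d x y) {m : ℝ} (hm : 0 ≤ m)
    (hmd : ∀ x y, x ≠ y → m ≤ d x y) (hμ : ∑ z, μ z = 0) :
    m / 2 * ∑ z, |μ z| ≤ TCnorm d μ := by
  have hg (x y : V) : m / 2 * SignType.sign (μ x) - m / 2 * SignType.sign (μ y) ≤ d x y := by
    rcases eq_or_ne x y with rfl | hxy
    · simpa using hd x x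
    · have hsign (t : ℝ) : |(SignType.sign t : ℝ)| ≤ 1 := by
        rcases lt_trichotomy t 0 with h | rfl | h <;> simp [*]
      have hx := abs_le.1 (hsign (μ x))
      have hy := abs_le.1 (hsign (μ y))
      nlinarith [hmd x y hxy]
  convert sum_mul_le_TCnorm hg hμ using 1
  rw [mul_sum]
  exact sum_congr rfl fun z _ ↦ by rw [mul_left_comm, mul_comm (μ z), sign_mul_self]

end TransportationCost

section Distortion

/-- `D` is admissible in the definition of the `L₁`-distortion of the distance function `ρ`. -/
def EmbedsInL1 {M : Type*} (ρ : M → M → ℝ) (D : ℝ) : Prop :=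
  1 ≤ D ∧ ∃ (Ω : Type) (_ : MeasurableSpace Ω) (ν : Measure Ω) (f : M → Lp ℝ 1 ν),
    ∀ x y : M, ρ x y ≤ dist (f x) (f y) ∧ dist (f x) (f y) ≤ D * ρ x y

/-- The distance on `TC(V, d)` induced by the transportation cost norm. -/
noncomputable def tcDist {V : Type*} [Fintype V] [DecidableEq V] (d : V → V → ℝ)
    (μ ν : {μ : V → ℝ // ∑ x, μ x = 0}) : ℝ :=
  TCnorm d fun x ↦ μ.1 x - ν.1 x

lemma le_c1TC_of_forall_embedsInL1 {V : Type*} [Fintype V] [DecidableEq V] {d : V → V → ℝ}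
    (hne : ∃ D, EmbedsInL1 (tcDist d) D) {c : ℝ} (hc : ∀ D, EmbedsInL1 (tcDist d) D → c ≤ D) :
    c ≤ c1TC d :=
  le_csInf hne hc

lemma embedsInL1_of_le_sum_abs {M : Type*} {V : Type} [Fintype V] {ρ : M → M → ℝ} {D : ℝ}
    (hD : 1 ≤ D) (T : M → V → ℝ) (hlower : ∀ x y, ρ x y ≤ ∑ z, |T x z - T y z|)
    (hupper : ∀ x y, ∑ z, |T x z - T y z| ≤ D * ρ x y) : EmbedsInL1 ρ D := by
  let _ : MeasurableSpace V := ⊤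
  have : MeasurableSingletonClass V := ⟨fun _ ↦ trivial⟩
  have hint (g : V → ℝ) : Integrable g (Measure.count : Measure V) := .of_finite
  refine ⟨hD, V, ⊤, Measure.count, fun x ↦ (hint (T x)).toL1, fun x y ↦ ?_⟩
  have hdist : dist (hint (T x)).toL1 (hint (T y)).toL1 = ∑ z, |T x z - T y z| := by
    rw [dist_eq_norm, ← Integrable.toL1_sub, L1.norm_of_fun_eq_integral_norm,
      integral_fintype (hint _).norm]
    simp [Measure.real]
  rw [hdist]
  exact ⟨hlower x y, hupper x y⟩

theorem exists_embedsInL1_tcDist {V : Type} [Fintype V] [DecidableEq V] [Nonempty V]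
    {d : V → V → ℝ} (hd : ∀ x y, 0 ≤ d x y) {m : ℝ} (hm : 0 < m)
    (hmd : ∀ x y, x ≠ y → m ≤ d x y) : ∃ D, EmbedsInL1 (tcDist d) D := by
  obtain ⟨M, hM⟩ : ∃ M, ∀ p : V × V, d p.1 p.2 ≤ M :=
    (Finite.exists_max fun p : V × V ↦ d p.1 p.2).imp' (fun p : V × V ↦ d p.1 p.2) fun _ h ↦ h
  have hM0 : 0 ≤ M := (hd _ _).trans (hM (Classical.arbitrary _))
  refine ⟨_, embedsInL1_of_le_sum_abs (le_max_left 1 (2 * M / m)) (fun μ z ↦ M * μ.1 z)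
    (fun μ ν ↦ ?_) fun μ ν ↦ ?_⟩ <;>
  have hzero : ∑ z, (μ.1 z - ν.1 z) = 0 := by rw [sum_sub_distrib, μ.2, ν.2, sub_zero]
  · simpa only [tcDist, ← mul_sub, abs_mul, abs_of_nonneg hM0, ← mul_sum] using
      TCnorm_le_mul_sum_abs hd (fun x y ↦ hM (x, y)) hzero
  · have hlower := mul_sum_abs_le_TCnorm hd hm.le hmd hzero
    calc ∑ z, |M * μ.1 z - M * ν.1 z| = 2 * M / m * (m / 2 * ∑ z, |μ.1 z - ν.1 z|) := by
          simp only [← mul_sub, abs_mul, abs_of_nonneg hM0, ← mul_sum]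
          field_simp
      _ ≤ max 1 (2 * M / m) * tcDist d μ ν := by
          gcongr
          exacts [le_max_right _ _, hlower]

end Distortion

section LatticeTest

variable {V : Type*} [Fintype V]

lemma sum_mul_abs_le_of_forall_indicator {I J : Type*} [Fintype I] [Fintype J] {w : I → V → ℤ}
    (hw : ∀ i, ∑ z, w i z = 0) {a b : J → V} {p : I → ℝ} {q : J → ℝ} (hp : ∀ i, 0 ≤ p i)
    (hcut : ∀ S : Set V, ∑ i, p i * |∑ z, (w i z : ℝ) * S.indicator 1 z| ≤
      ∑ j, q j * |S.indicator 1 (a j) - S.indicator 1 (b j)|) (φ : V → ℝ) :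
    ∑ i, p i * |∑ z, w i z * φ z| ≤ ∑ j, q j * |φ (a j) - φ (b j)| := by
  let N : Seminorm ℝ (V → ℝ) := .of (fun φ ↦ ∑ i, p i * |∑ z, w i z * φ z|)
    (fun φ ψ ↦ by
      rw [← sum_add_distrib]
      refine sum_le_sum fun i _ ↦ ?_
      simp only [Pi.add_apply, mul_add, sum_add_distrib]
      exact (mul_le_mul_of_nonneg_left (abs_add_le _ _) (hp i)).trans_eq (mul_add _ _ _))
    fun c φ ↦ by
      simp only [Pi.smul_apply, smul_eq_mul, mul_left_comm _ c, ← mul_sum, abs_mul,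
        Real.norm_eq_abs]
      simp only [mul_left_comm _ |c|, ← mul_sum]
  have hone : N 1 = 0 := by
    have hw' (i : I) : ∑ z, (w i z : ℝ) = 0 := mod_cast hw i
    change ∑ i, p i * |∑ z, w i z * (1 : V → ℝ) z| = 0
    simp [hw']
  exact seminorm_le_sum_abs_of_forall_indicator N hone hcut φ

variable [DecidableEq V] {d : V → V → ℝ}

/-- The projection of the lattice `V → ℤ` to `M₀(V)` which corrects the total mass at the base
point `o`; it fixes the vectors of total mass zero. -/
def massCorrected (o : V) (w : V → ℤ) : {μ : V → ℝ // ∑ z, μ z = 0} :=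
  ⟨fun z ↦ w z - if z = o then ∑ v, (w v : ℝ) else 0, by simp [sum_sub_distrib]⟩

lemma massCorrected_of_sum_eq_zero (o : V) {w : V → ℤ} (hw : ∑ z, w z = 0) (z : V) :
    (massCorrected o w).1 z = w z := by
  have hw' : ∑ v, (w v : ℝ) = 0 := mod_cast hw
  simp [massCorrected, hw']

lemma tcDist_massCorrected_add (o : V) (x w : V → ℤ) :
    tcDist d (massCorrected o (x + w)) (massCorrected o x) =
      TCnorm d (massCorrected o w).1 := by
  refine congrArg (TCnorm d) (funext fun z ↦ ?_)
  simp only [massCorrected, Pi.add_apply, Int.cast_add, sum_add_distrib]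
  split_ifs <;> ring

theorem EmbedsInL1.sum_mul_le [Nonempty V] (hd : ∀ x y, 0 ≤ d x y) {D : ℝ}
    (hD : EmbedsInL1 (tcDist d) D) {I J : Type*} [Fintype I] [Fintype J]
    {w : I → V → ℤ} (hw : ∀ i, ∑ z, w i z = 0)
    {g : I → V → ℝ} (hg : ∀ i x y, g i x - g i y ≤ d x y) {a b : J → V}
    {p : I → ℝ} {q : J → ℝ} (hp : ∀ i, 0 ≤ p i) (hq : ∀ j, 0 ≤ q j)
    (hcut : ∀ S : Set V, ∑ i, p i * |∑ z, (w i z : ℝ) * S.indicator 1 z| ≤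
      ∑ j, q j * |S.indicator 1 (a j) - S.indicator 1 (b j)|) :
    ∑ i, p i * ∑ z, w i z * g i z ≤ D * ∑ j, q j * d (a j) (b j) := by
  classical
  obtain ⟨hD1, Ω, _, ν, f, hf⟩ := hD
  let o : V := Classical.arbitrary V
  let F : (V → ℤ) → Lp ℝ 1 ν := fun x ↦ f (massCorrected o x)
  let u : J → V → ℤ := fun j z ↦ (if a j = z then 1 else 0) - if b j = z then 1 else 0
  have hu (j : J) : ∑ z, u j z = 0 := by simp [u, sum_sub_distrib]
  have hF (w x : V → ℤ) : TCnorm d (massCorrected o w).1 ≤ ‖Δ_[w] F x‖ ∧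
      ‖Δ_[w] F x‖ ≤ D * TCnorm d (massCorrected o w).1 := by
    have := hf (massCorrected o (x + w)) (massCorrected o x)
    rwa [tcDist_massCorrected_add, dist_eq_norm] at this
  have hlin (T : V → Lp ℝ 1 ν) :
      ∑ i, p i * ‖∑ z, (w i z : ℝ) • T z‖ ≤ ∑ j, q j * ‖∑ z, (u j z : ℝ) • T z‖ := by
    refine L1_sum_norm_le_of_forall_real (fun φ ↦ ?_) T
    simpa [u, sub_mul, sum_sub_distrib] using sum_mul_abs_le_of_forall_indicator hw hp hcut φ
  have hlower (i : I) (x : V → ℤ) (n : ℕ) : n * ∑ z, w i z * g i z ≤ ‖Δ_[n • w i] F x‖ := by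
    have hnw : ∑ z, (n • w i) z = 0 := by simp only [Pi.smul_apply, ← smul_sum, hw, smul_zero]
    refine le_trans (le_of_eq ?_) ((sum_mul_le_TCnorm (hg i) (massCorrected o _).2).trans
      (hF (n • w i) x).1)
    simp only [massCorrected_of_sum_eq_zero o hnw]
    simp [mul_sum, mul_assoc]
  have hupper (j : J) (x : V → ℤ) : ‖Δ_[u j] F x‖ ≤ D * d (a j) (b j) := by
    refine (hF (u j) x).2.trans (mul_le_mul_of_nonneg_left ?_ (zero_le_one.trans hD1))
    rw [funext (massCorrected_of_sum_eq_zero o (hu j))]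
    simpa [u] using TCnorm_ite_sub_ite_le hd (a j) (b j)
  refine (sum_mul_le_sum_mul_of_forall_linear hp hq hlin (fun v x ↦ (hF v x).2) hlower
    hupper).trans_eq ?_
  simp only [mul_sum, mul_left_comm D]

end LatticeTest

namespace WGraph

variable {G H : WGraph}

section Slash

lemma slashEmbed_s (e : G.ι) : slashEmbed G H e H.s = Sum.inl (G.src e) := by
  simp [slashEmbed]

lemma slashEmbed_t (hst : H.s ≠ H.t) (e : G.ι) : slashEmbed G H e H.t = Sum.inl (G.dst e) := by
  simp [slashEmbed, hst.symm]

lemma slashEmbed_of_ne (e : G.ι) (v : {v : H.V // v ≠ H.s ∧ v ≠ H.t}) :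
    slashEmbed G H e v = Sum.inr (e, v) := by
  simp [slashEmbed, v.2.1, v.2.2]

lemma sum_slash (F : (G.slash H).ι → ℝ) : ∑ p, F p = ∑ e : G.ι, ∑ f : H.ι, F (e, f) :=
  Fintype.sum_prod_type F

lemma edgeVar_slash (φ : (G.slash H).V → ℝ) (e : G.ι) (f : H.ι) :
    (G.slash H).edgeVar φ (e, f) = G.th e * H.edgeVar (fun v ↦ φ (slashEmbed G H e v)) f :=
  mul_assoc _ _ _

/-- The potential on `G ⊘ H` which is `g` on the vertices of `G` and `ψ e` on the copy of `H`
replacing the edge `e`. -/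
def slashGlue (g : G.V → ℝ) (ψ : G.ι → H.V → ℝ) : (G.slash H).V → ℝ :=
  Sum.elim g fun q ↦ ψ q.1 q.2

lemma slashGlue_slashEmbed {g : G.V → ℝ} {ψ : G.ι → H.V → ℝ} (hs : ∀ e, ψ e H.s = g (G.src e))
    (ht : ∀ e, ψ e H.t = g (G.dst e)) (e : G.ι) (v : H.V) :
    slashGlue g ψ (slashEmbed G H e v) = ψ e v := by
  unfold slashEmbed
  split_ifs with h₁ h₂
  · rw [h₁, hs]; rfl
  · rw [h₂, ht]; rfl
  · rfl

lemma IsConnected.slash (hG : G.IsConnected) (hH : H.IsConnected) (hst : H.s ≠ H.t) :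
    (G.slash H).IsConnected := by
  refine .of_forall_iff fun P hP ↦ ?_
  have hcopy (e : G.ι) (x y : H.V) : P (slashEmbed G H e x) ↔ P (slashEmbed G H e y) :=
    hH.forall_iff (P := fun v ↦ P (slashEmbed G H e v)) (fun f ↦ hP (e, f)) x y
  have hbase (x y : G.V) : P (.inl x) ↔ P (.inl y) := by
    refine hG.forall_iff (P := fun v ↦ P (.inl v)) (fun e ↦ ?_) x y
    simpa only [slashEmbed_s, slashEmbed_t hst] using hcopy e H.s H.t
  have hall (x : (G.slash H).V) : P x ↔ P (.inl G.s) := by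
    rcases x with x | ⟨e, v⟩
    · exact hbase x G.s
    · rw [← slashEmbed_of_ne, hcopy e v H.s, slashEmbed_s]
      exact hbase _ _
  exact fun x y hy ↦ (hall x).2 ((hall y).1 hy)

end Slash

/-- A connected network with dyadic thickness `2 ^ (-lev e)` and unit volume. -/
structure IsDyadic (G : WGraph) (lev : G.ι → ℕ) : Prop where
  isConnected : G.IsConnected
  len_pos : ∀ e, 0 < G.len e
  th_eq : ∀ e, G.th e = (1 / 2) ^ lev e
  sum_th_mul_len : ∑ e, G.th e * G.len e = 1

lemma IsDyadic.th_nonneg {lev : G.ι → ℕ} (hG : G.IsDyadic lev) (e : G.ι) : 0 ≤ G.th e := by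
  rw [hG.th_eq]
  positivity

lemma IsDyadic.sum_th_mul_gdist_le_one {lev : G.ι → ℕ} (hG : G.IsDyadic lev) :
    ∑ e, G.th e * G.gdist (G.src e) (G.dst e) ≤ 1 :=
  hG.sum_th_mul_len ▸ sum_le_sum fun e _ ↦
    mul_le_mul_of_nonneg_left (gdist_src_dst_le (fun e ↦ (hG.len_pos e).le) e) (hG.th_nonneg e)

lemma IsDyadic.slash {lev : G.ι → ℕ} {lev' : H.ι → ℕ} (hG : G.IsDyadic lev)
    (hH : H.IsDyadic lev') (hst : H.s ≠ H.t) :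
    (G.slash H).IsDyadic fun p ↦ lev p.1 + lev' p.2 where
  isConnected := hG.isConnected.slash hH.isConnected hst
  len_pos p := mul_pos (hG.len_pos _) (hH.len_pos _)
  th_eq p := by
    rw [pow_add, ← hG.th_eq, ← hH.th_eq]
    rfl
  sum_th_mul_len := by
    rw [sum_slash]
    change ∑ e, ∑ f, (G.th e * H.th f) * (G.len e * H.len f) = 1
    simp only [mul_mul_mul_comm (G.th _), ← mul_sum, hH.sum_th_mul_len, mul_one,
      hG.sum_th_mul_len]

/-- A dyadic network whose thickness dominates a unit flow from `s` to `t` and on which `s` and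
`t` are at distance at least `1`. The two conditions are stated in dual form, through arbitrary
potentials and through one `1`-Lipschitz potential. -/
structure IsUnitNetwork (G : WGraph) (lev : G.ι → ℕ) : Prop extends G.IsDyadic lev where
  abs_sub_le : ∀ ψ : G.V → ℝ, |ψ G.s - ψ G.t| ≤ ∑ e, G.edgeVar ψ e
  exists_isLip : ∃ ρ, G.IsLip ρ ∧ ρ G.s = 1 ∧ ρ G.t = 0

lemma IsUnitNetwork.s_ne_t {lev : G.ι → ℕ} (hG : G.IsUnitNetwork lev) : G.s ≠ G.t := by
  obtain ⟨ρ, -, hs, ht⟩ := hG.exists_isLip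
  intro h
  rw [h, ht] at hs
  exact zero_ne_one hs

/-- The data making a unit network `H` a building block: its thicknesses are `1` and `1/2`, and
the pair of vertices `top`, `bot` is separated by a `1`-Lipschitz height function which vanishes
at the terminals and varies only along the thin edges, the gap `κ` being the gain per slash
product. Conversely the thin edges control the variation of any function between `top` and
`bot`. -/
structure Block (H : WGraph) (κ : ℝ) where
  lev : H.ι → ℕ
  isUnitNetwork : H.IsUnitNetwork lev
  lev_le_one : ∀ f, lev f ≤ 1
  top : H.V
  bot : H.V
  height : H.V → ℝ
  isLip_height : H.IsLip height
  height_s : height H.s = 0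
  height_t : height H.t = 0
  height_src_eq : ∀ f, lev f = 0 → height (H.src f) = height (H.dst f)
  height_top_sub_bot : height top - height bot = κ
  abs_sub_le : ∀ ψ : H.V → ℝ, |ψ top - ψ bot| ≤ 2 * ∑ f with lev f = 1, H.edgeVar ψ f

/-- A multiscale family of vertex pairs (chords) of a dyadic network `G`, of total weighted length
`n`. At each scale `k`, the chords are jointly controlled by the edges of level more than `k`, while
any prescription of signs for them is realized, up to the factor `κ`, by a single `1`-Lipschitz
potential which varies only along these edges. -/
structure ChordFamily (G : WGraph) (n : ℕ) (κ : ℝ) where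
  lev : G.ι → ℕ
  isDyadic : G.IsDyadic lev
  lev_le : ∀ e, lev e ≤ n
  I : Type
  [finI : Fintype I]
  scale : I → ℕ
  scale_lt : ∀ c, scale c < n
  length : I → ℝ
  fst : I → G.V
  snd : I → G.V
  sum_length : ∑ c, (1 / 2) ^ scale c * length c = n
  sum_abs_sub_le : ∀ (φ : G.V → ℝ) (k : ℕ),
    ∑ c with scale c = k, (1 / 2) ^ k * |φ (fst c) - φ (snd c)| ≤
      2 * ∑ e with k < lev e, G.edgeVar φ e
  exists_isLip : ∀ (k : ℕ) (ε : I → ℝ), (∀ c, |ε c| ≤ 1) → ∃ g, G.IsLip g ∧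
    (∀ e, lev e ≤ k → g (G.src e) = g (G.dst e)) ∧
    ∀ c, scale c = k → g (fst c) - g (snd c) = ε c * (κ * length c)

namespace ChordFamily

attribute [instance] finI

variable {n : ℕ} {κ : ℝ}

/-- The empty chord family of the single edge. -/
def edge (κ : ℝ) : ChordFamily edgeGraph 0 κ where
  lev _ := 0
  isDyadic :=
    { isConnected := .of_forall_iff fun P hP x y hy ↦ by
        have hP : P false ↔ P true := hP ()
        rcases x with _ | _ <;> rcases y with _ | _
        exacts [hy, hP.2 hy, hP.1 hy, hy]
      len_pos _ := one_pos
      th_eq _ := (pow_zero _).symm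
      sum_th_mul_len := by
        change ∑ _ : Unit, (1 : ℝ) * 1 = 1
        simp }
  lev_le _ := le_rfl
  I := Empty
  scale := Empty.elim
  scale_lt c := c.elim
  length := Empty.elim
  fst := Empty.elim
  snd := Empty.elim
  sum_length := by simp
  sum_abs_sub_le φ k := by simp
  exists_isLip k ε _ := ⟨0, fun e ↦ by simp [edgeGraph], fun _ _ ↦ rfl, fun c ↦ c.elim⟩

lemma edgeVar_add_chord_le (C : ChordFamily G n κ) (B : Block H κ) (φ : (G.slash H).V → ℝ) (k : ℕ)
    (e : G.ι) :
    2 * (if k < C.lev e then G.edgeVar (fun v ↦ φ (.inl v)) e else 0) +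
        (if C.lev e = k then
          (1 / 2) ^ k * |φ (slashEmbed G H e B.top) - φ (slashEmbed G H e B.bot)| else 0) ≤
      2 * ∑ f, if k < C.lev e + B.lev f then (G.slash H).edgeVar φ (e, f) else 0 := by
  have hth := C.isDyadic.th_nonneg e
  let ψ : H.V → ℝ := fun v ↦ φ (slashEmbed G H e v)
  simp only [edgeVar_slash]
  rcases lt_trichotomy k (C.lev e) with hk | rfl | hk
  · have hflow := B.isUnitNetwork.abs_sub_le ψ
    simp only [ψ, slashEmbed_s, slashEmbed_t B.isUnitNetwork.s_ne_t] at hflow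
    simp only [hk, hk.ne', hk.trans_le (Nat.le_add_right _ _), if_true, if_false, add_zero,
      ← mul_sum]
    exact mul_le_mul_of_nonneg_left (mul_le_mul_of_nonneg_left hflow hth) zero_le_two
  · have hlev (f : H.ι) : C.lev e < C.lev e + B.lev f ↔ B.lev f = 1 := by
      have := B.lev_le_one f
      omega
    have hchord := mul_le_mul_of_nonneg_left (B.abs_sub_le ψ) hth
    simp only [lt_irrefl, hlev, if_true, if_false, mul_zero, zero_add, ← sum_filter, ← mul_sum,
      ← C.isDyadic.th_eq]
    exact hchord.trans_eq (mul_left_comm _ _ _)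
  · simp only [hk.not_gt, hk.ne, if_false, mul_zero, add_zero]
    refine mul_nonneg zero_le_two (sum_nonneg fun f _ ↦ ?_)
    have := edgeVar_nonneg B.isUnitNetwork.th_nonneg ψ f
    split_ifs
    exacts [mul_nonneg hth this, le_rfl]

lemma exists_isLip_slash (C : ChordFamily G n κ) (B : Block H κ) (k : ℕ) (ε : C.I ⊕ G.ι → ℝ)
    (hε : ∀ c, |ε c| ≤ 1) : ∃ g, (G.slash H).IsLip g ∧
      (∀ p : G.ι × H.ι, C.lev p.1 + B.lev p.2 ≤ k →
        g ((G.slash H).src p) = g ((G.slash H).dst p)) ∧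
      (∀ c, C.scale c = k →
        g (.inl (C.fst c)) - g (.inl (C.snd c)) = ε (.inl c) * (κ * C.length c)) ∧
      ∀ e, C.lev e = k →
        g (slashEmbed G H e B.top) - g (slashEmbed G H e B.bot) = ε (.inr e) * (κ * G.len e) := by
  obtain ⟨g, hlip, hconst, hchord⟩ := C.exists_isLip k (ε ∘ .inl) fun c ↦ hε _
  obtain ⟨ρ, hρ, hρs, hρt⟩ := B.isUnitNetwork.exists_isLip
  let ψ (e : G.ι) (v : H.V) : ℝ :=
    if C.lev e = k then g (G.src e) + ε (.inr e) * G.len e * B.height v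
    else g (G.dst e) + (g (G.src e) - g (G.dst e)) * ρ v
  have hglue := slashGlue_slashEmbed (g := g) (ψ := ψ) (fun e ↦ by simp [ψ, hρs, B.height_s])
    fun e ↦ by
      by_cases hk : C.lev e = k
      · simp [ψ, B.height_t, hk, hconst e hk.le]
      · simp [ψ, hk, hρt]
  refine ⟨slashGlue g ψ, ?_, ?_, hchord, ?_⟩
  · rintro ⟨e, f⟩
    change |slashGlue g ψ (slashEmbed G H e _) - slashGlue g ψ (slashEmbed G H e _)| ≤
      G.len e * H.len f
    rw [hglue, hglue]
    have hlen := (C.isDyadic.len_pos e).le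
    by_cases hk : C.lev e = k
    · simp only [ψ, if_pos hk, add_sub_add_left_eq_sub, ← mul_sub, abs_mul, abs_of_nonneg hlen]
      exact mul_le_mul (mul_le_of_le_one_left hlen (hε _)) (B.isLip_height f) (abs_nonneg _) hlen
    · simp only [ψ, if_neg hk, add_sub_add_left_eq_sub, ← mul_sub, abs_mul]
      exact mul_le_mul (hlip e) (hρ f) (abs_nonneg _) hlen
  · rintro ⟨e, f⟩ hef
    change slashGlue g ψ (slashEmbed G H e _) = slashGlue g ψ (slashEmbed G H e _)
    dsimp only at hef
    rw [hglue, hglue]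
    by_cases hk : C.lev e = k
    · simp only [ψ, if_pos hk, B.height_src_eq f (by omega)]
    · simp [ψ, hk, hconst e (by omega)]
  · intro e he
    rw [hglue, hglue]
    simp only [ψ, if_pos he, add_sub_add_left_eq_sub, ← mul_sub, B.height_top_sub_bot]
    ring

/-- The chords of `G ⊘ H` are those of `G` together with the chord of the block in each copy. -/
def slash (C : ChordFamily G n κ) (B : Block H κ) : ChordFamily (G.slash H) (n + 1) κ where
  lev p := C.lev p.1 + B.lev p.2
  isDyadic := C.isDyadic.slash B.isUnitNetwork.toIsDyadic B.isUnitNetwork.s_ne_t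
  lev_le p := add_le_add (C.lev_le _) (B.lev_le_one _)
  I := C.I ⊕ G.ι
  scale := Sum.elim C.scale C.lev
  scale_lt := Sum.rec (fun c ↦ (C.scale_lt c).trans n.lt_succ_self)
    fun e ↦ Nat.lt_succ_of_le (C.lev_le e)
  length := Sum.elim C.length G.len
  fst := Sum.elim (fun c ↦ .inl (C.fst c)) fun e ↦ slashEmbed G H e B.top
  snd := Sum.elim (fun c ↦ .inl (C.snd c)) fun e ↦ slashEmbed G H e B.bot
  sum_length := by
    simp only [Fintype.sum_sum_type, Sum.elim_inl, Sum.elim_inr, C.sum_length, ← C.isDyadic.th_eq,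
      C.isDyadic.sum_th_mul_len, Nat.cast_succ]
  sum_abs_sub_le φ k := by
    have hold := C.sum_abs_sub_le (fun v ↦ φ (.inl v)) k
    have hnew := sum_le_sum fun e (_ : e ∈ univ) ↦ C.edgeVar_add_chord_le B φ k e
    simp only [sum_add_distrib, ← mul_sum] at hnew
    rw [sum_filter, sum_filter, sum_slash, Fintype.sum_sum_type]
    rw [sum_filter, sum_filter] at hold
    exact (add_le_add_left hold _).trans hnew
  exists_isLip k ε hε := by
    obtain ⟨g, hlip, hconst, hold, hnew⟩ := C.exists_isLip_slash B k ε hε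
    exact ⟨g, hlip, hconst, Sum.rec hold hnew⟩

/-- The chord family of a slash power. -/
def slashPow (B : Block H κ) : (n : ℕ) → ChordFamily (H.slashPow n) n κ
  | 0 => edge κ
  | n + 1 => (slashPow B n).slash B

end ChordFamily

end WGraph

namespace WGraph.ChordFamily

variable {G : WGraph} {n : ℕ} {κ : ℝ}

/-- The integral measure `∑ c, ε c • (δ (fst c) - δ (snd c))` over the chords `c` of scale `k`. -/
def signedChords (C : ChordFamily G n κ) (k : ℕ) (ε : C.I → ℤˣ) (z : G.V) : ℤ :=
  ∑ c with C.scale c = k,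
    ε c * ((if C.fst c = z then 1 else 0) - if C.snd c = z then 1 else 0)

lemma sum_signedChords_mul (C : ChordFamily G n κ) (k : ℕ) (ε : C.I → ℤˣ) (φ : G.V → ℝ) :
    ∑ z, C.signedChords k ε z * φ z =
      ∑ c with C.scale c = k, ((ε c : ℤ) : ℝ) * (φ (C.fst c) - φ (C.snd c)) := by
  simp only [signedChords, Int.cast_sum, sum_mul]
  rw [sum_comm]
  refine sum_congr rfl fun c _ ↦ ?_
  push_cast
  simp only [mul_assoc, ← mul_sum, sub_mul, sum_sub_distrib]
  simp

lemma sum_signedChords (C : ChordFamily G n κ) (k : ℕ) (ε : C.I → ℤˣ) :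
    ∑ z, C.signedChords k ε z = 0 := by
  have := C.sum_signedChords_mul k ε 1
  simp only [Pi.one_apply, mul_one, sub_self, mul_zero, sum_const_zero] at this
  exact_mod_cast this

lemma exists_isLip_sum_signedChords_mul (C : ChordFamily G n κ) (k : ℕ) (ε : C.I → ℤˣ) :
    ∃ g, G.IsLip g ∧
      ∑ z, C.signedChords k ε z * g z = κ * ∑ c with C.scale c = k, C.length c := by
  obtain ⟨g, hg, -, hchord⟩ := C.exists_isLip k (fun c ↦ ((ε c : ℤ) : ℝ)) fun c ↦ by
    rcases Int.units_eq_one_or (ε c) with h | h <;> simp [h]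
  refine ⟨g, hg, ?_⟩
  rw [sum_signedChords_mul, mul_sum]
  refine sum_congr rfl fun c hc ↦ ?_
  rw [hchord c (mem_filter.1 hc).2]
  rcases Int.units_eq_one_or (ε c) with h | h <;> simp [h]

lemma sum_range_sum_length (C : ChordFamily G n κ) :
    ∑ k ∈ range n, (1 / 2) ^ k * ∑ c with C.scale c = k, C.length c = n := by
  rw [← C.sum_length,
    ← sum_fiberwise_of_maps_to fun c _ ↦ mem_range.2 (C.scale_lt c)]
  refine sum_congr rfl fun k _ ↦ ?_
  rw [mul_sum]
  exact sum_congr rfl fun c hc ↦ by rw [(mem_filter.1 hc).2]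

lemma sum_abs_sum_signedChords_mul_indicator_le (C : ChordFamily G n κ) [DecidableEq C.I]
    (S : Set G.V) :
    ∑ k ∈ range n, (1 / 2) ^ k * ((2 ^ Fintype.card C.I)⁻¹ *
      ∑ ε : C.I → ℤˣ, |∑ z, C.signedChords k ε z * S.indicator (1 : G.V → ℝ) z|) ≤
      4 / (2 - √2) * ∑ e, G.edgeVar (S.indicator 1) e := by
  classical
  set χ : G.V → ℝ := S.indicator 1
  have hχ (c : C.I) : χ (C.fst c) - χ (C.snd c) = 0 ∨ |χ (C.fst c) - χ (C.snd c)| = 1 := by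
    simp only [χ, Set.indicator_apply, Pi.one_apply]
    split_ifs <;> simp
  have hW (k : ℕ) : ∑ c with C.scale c = k, (1 / 2) ^ k * |χ (C.fst c) - χ (C.snd c)| ≤
      2 * ∑ e, G.edgeVar χ e :=
    (C.sum_abs_sub_le χ k).trans <| mul_le_mul_of_nonneg_left
      (sum_le_sum_of_subset_of_nonneg (filter_subset _ _)
        fun e _ _ ↦ edgeVar_nonneg C.isDyadic.th_nonneg χ e) zero_le_two
  simp only [sum_signedChords_mul]
  exact (sum_half_pow_mul_average_units_abs_le hχ hW n).trans_eq (by ring)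

lemma mul_le_of_embedsInL1 (C : ChordFamily G n κ) {D : ℝ}
    (hD : EmbedsInL1 (tcDist G.gdist) D) : κ * n ≤ D * (4 / (2 - √2)) := by
  classical
  have hconn := C.isDyadic.isConnected
  have hlen (e : G.ι) : 0 ≤ G.len e := (C.isDyadic.len_pos e).le
  have _ : Nonempty G.V := ⟨G.s⟩
  have hsqrt : 0 < 2 - √2 := by linarith [Real.sqrt_two_lt_three_halves]
  choose g hg hgC using C.exists_isLip_sum_signedChords_mul
  let p (q : Fin n × (C.I → ℤˣ)) : ℝ := (1 / 2) ^ (q.1 : ℕ) * (2 ^ Fintype.card C.I)⁻¹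
  have hcut (S : Set G.V) :
      ∑ q, p q * |∑ z, C.signedChords q.1 q.2 z * S.indicator (1 : G.V → ℝ) z| ≤
        ∑ e, 4 / (2 - √2) * G.th e *
          |S.indicator (1 : G.V → ℝ) (G.src e) - S.indicator (1 : G.V → ℝ) (G.dst e)| := by
    have := C.sum_abs_sum_signedChords_mul_indicator_le S
    rw [sum_range] at this
    simpa only [p, Fintype.sum_prod_type, mul_assoc, mul_sum, edgeVar] using this
  have hmain := hD.sum_mul_le (gdist_nonneg hlen) (w := fun q ↦ C.signedChords q.1 q.2)
    (fun q ↦ C.sum_signedChords q.1 q.2) (g := fun q ↦ g q.1 q.2)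
    (fun q ↦ (hg q.1 q.2).sub_le_gdist hconn) (p := p) (q := fun e ↦ 4 / (2 - √2) * G.th e)
    (fun q ↦ by positivity)
    (fun e ↦ mul_nonneg (by positivity) (C.isDyadic.th_nonneg e)) hcut
  have hleft : ∑ q, p q * ∑ z, C.signedChords q.1 q.2 z * g q.1 q.2 z = κ * n := by
    rw [← C.sum_range_sum_length, sum_range, mul_sum, Fintype.sum_prod_type]
    simp only [hgC, p, sum_const, card_univ, Fintype.card_fun, Fintype.card_units_int, nsmul_eq_mul]
    refine sum_congr rfl fun k _ ↦ ?_
    push_cast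
    field_simp
  refine hleft.symm.trans_le (hmain.trans (mul_le_mul_of_nonneg_left ?_ (zero_le_one.trans hD.1)))
  simp only [mul_assoc, ← mul_sum]
  exact mul_le_of_le_one_right (by positivity) C.isDyadic.sum_th_mul_gdist_le_one

theorem le_c1TC (C : ChordFamily G n κ) : (2 - √2) / 4 * κ * n ≤ c1TC G.gdist := by
  have hlen (e : G.ι) : 0 ≤ G.len e := (C.isDyadic.len_pos e).le
  have _ : Nonempty G.V := ⟨G.s⟩
  have hsqrt : 0 < 2 - √2 := by linarith [Real.sqrt_two_lt_three_halves]
  obtain ⟨m, hm, hmd⟩ := exists_pos_forall_le_gdist C.isDyadic.len_pos C.isDyadic.isConnected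
  refine le_c1TC_of_forall_embedsInL1 (exists_embedsInL1_tcDist (gdist_nonneg hlen) hm hmd)
    fun D hD ↦ ?_
  calc (2 - √2) / 4 * κ * n = (2 - √2) / 4 * (κ * n) := mul_assoc _ _ _
    _ ≤ (2 - √2) / 4 * (D * (4 / (2 - √2))) :=
      mul_le_mul_of_nonneg_left (C.mul_le_of_embedsInL1 hD) (by positivity)
    _ = D := by field_simp

end WGraph.ChordFamily

namespace WGraph

variable {G H : WGraph}

section EdgeReplace

/-- The vertex of `G.edgeReplace e₀ H` corresponding to a vertex of the copy of `H`. -/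
def replaceEmbed (e₀ : G.ι) (v : H.V) : G.V ⊕ {v : H.V // v ≠ H.s ∧ v ≠ H.t} :=
  if hs : v = H.s then .inl (G.src e₀)
  else if ht : v = H.t then .inl (G.dst e₀)
  else .inr ⟨v, hs, ht⟩

lemma replaceEmbed_s (e₀ : G.ι) : replaceEmbed e₀ H.s = .inl (G.src e₀) := by
  simp [replaceEmbed]

lemma replaceEmbed_t (hst : H.s ≠ H.t) (e₀ : G.ι) :
    replaceEmbed e₀ H.t = .inl (G.dst e₀) := by
  simp [replaceEmbed, hst.symm]

lemma replaceEmbed_of_ne (e₀ : G.ι) (v : {v : H.V // v ≠ H.s ∧ v ≠ H.t}) :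
    replaceEmbed e₀ v.1 = .inr v := by
  simp [replaceEmbed, v.2.1, v.2.2]

/-- The potential on `G.edgeReplace e₀ H` which is `g` on the vertices of `G` and `ψ` on the copy
of `H`. -/
def replaceGlue (e₀ : G.ι) (g : G.V → ℝ) (ψ : H.V → ℝ) : (G.edgeReplace e₀ H).V → ℝ :=
  Sum.elim g fun v ↦ ψ v

lemma replaceGlue_replaceEmbed {e₀ : G.ι} {g : G.V → ℝ} {ψ : H.V → ℝ}
    (hs : ψ H.s = g (G.src e₀)) (ht : ψ H.t = g (G.dst e₀)) (v : H.V) :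
    replaceGlue e₀ g ψ (replaceEmbed e₀ v) = ψ v := by
  unfold replaceEmbed
  split_ifs with h₁ h₂
  · rw [h₁, hs]; rfl
  · rw [h₂, ht]; rfl
  · rfl

lemma isLip_replaceGlue {e₀ : G.ι} {g : G.V → ℝ} {ψ : H.V → ℝ} (hg : G.IsLip g)
    (hψ : ∀ f, |ψ (H.src f) - ψ (H.dst f)| ≤ G.len e₀ * H.len f)
    (hs : ψ H.s = g (G.src e₀)) (ht : ψ H.t = g (G.dst e₀)) :
    (G.edgeReplace e₀ H).IsLip (replaceGlue e₀ g ψ) := by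
  rintro (e | f)
  · exact hg e
  · change |replaceGlue e₀ g ψ (replaceEmbed e₀ _) - replaceGlue e₀ g ψ (replaceEmbed e₀ _)| ≤ _
    rw [replaceGlue_replaceEmbed hs ht, replaceGlue_replaceEmbed hs ht]
    exact hψ f

lemma sum_edgeReplace {e₀ : G.ι} (F : (G.edgeReplace e₀ H).ι → ℝ) :
    ∑ e, F e = ∑ e : {e // e ≠ e₀}, F (.inl e) + ∑ f : H.ι, F (.inr f) :=
  Fintype.sum_sum_type F

lemma edgeVar_edgeReplace_inr {e₀ : G.ι} (φ : (G.edgeReplace e₀ H).V → ℝ) (f : H.ι) :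
    (G.edgeReplace e₀ H).edgeVar φ (.inr f) =
      G.th e₀ * H.edgeVar (fun v ↦ φ (replaceEmbed e₀ v)) f :=
  mul_assoc _ _ _

lemma IsConnected.edgeReplace (hG : G.IsConnected) (hH : H.IsConnected) (hst : H.s ≠ H.t)
    (e₀ : G.ι) : (G.edgeReplace e₀ H).IsConnected := by
  refine .of_forall_iff fun P hP ↦ ?_
  have hcopy (x y : H.V) : P (replaceEmbed e₀ x) ↔ P (replaceEmbed e₀ y) :=
    hH.forall_iff (P := fun v ↦ P (replaceEmbed e₀ v)) (fun f ↦ hP (.inr f)) x y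
  have hbase (x y : G.V) : P (.inl x) ↔ P (.inl y) := by
    refine hG.forall_iff (P := fun v ↦ P (.inl v)) (fun e ↦ ?_) x y
    rcases eq_or_ne e e₀ with rfl | he
    · simpa only [replaceEmbed_s, replaceEmbed_t hst] using hcopy H.s H.t
    · exact hP (.inl ⟨e, he⟩)
  have hall (x : (G.edgeReplace e₀ H).V) : P x ↔ P (.inl G.s) := by
    rcases x with x | v
    · exact hbase x G.s
    · rw [← replaceEmbed_of_ne, hcopy v H.s, replaceEmbed_s]
      exact hbase _ _
  exact fun x y hy ↦ (hall x).2 ((hall y).1 hy)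

variable {lev : G.ι → ℕ} {lev' : H.ι → ℕ}

lemma IsDyadic.edgeReplace (hG : G.IsDyadic lev) (hH : H.IsDyadic lev') (hst : H.s ≠ H.t)
    (e₀ : G.ι) :
    (G.edgeReplace e₀ H).IsDyadic (Sum.elim (fun e ↦ lev e) fun f ↦ lev e₀ + lev' f) where
  isConnected := hG.isConnected.edgeReplace hH.isConnected hst e₀
  len_pos := Sum.rec (fun e ↦ hG.len_pos e) fun f ↦ mul_pos (hG.len_pos e₀) (hH.len_pos f)
  th_eq := by
    rintro (e | f)
    · exact hG.th_eq e
    · rw [Sum.elim_inr, pow_add, ← hG.th_eq, ← hH.th_eq]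
      rfl
  sum_th_mul_len := by
    rw [sum_edgeReplace, ← hG.sum_th_mul_len,
      Fintype.sum_eq_add_sum_subtype_ne (fun e ↦ G.th e * G.len e) e₀, add_comm]
    congr 1
    change ∑ f, (G.th e₀ * H.th f) * (G.len e₀ * H.len f) = _
    simp only [mul_mul_mul_comm (G.th _), ← mul_sum, hH.sum_th_mul_len, mul_one]

lemma IsUnitNetwork.edgeReplace (hG : G.IsUnitNetwork lev) (hH : H.IsUnitNetwork lev')
    (e₀ : G.ι) :
    (G.edgeReplace e₀ H).IsUnitNetwork (Sum.elim (fun e ↦ lev e) fun f ↦ lev e₀ + lev' f) where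
  toIsDyadic := hG.toIsDyadic.edgeReplace hH.toIsDyadic hH.s_ne_t e₀
  abs_sub_le ψ := by
    have hflow := hH.abs_sub_le fun v ↦ ψ (replaceEmbed e₀ v)
    simp only [replaceEmbed_s, replaceEmbed_t hH.s_ne_t] at hflow
    refine (hG.abs_sub_le fun v ↦ ψ (.inl v)).trans ?_
    rw [sum_edgeReplace, Fintype.sum_eq_add_sum_subtype_ne _ e₀, add_comm]
    simp only [edgeVar_edgeReplace_inr, ← mul_sum]
    exact add_le_add_right (mul_le_mul_of_nonneg_left hflow (hG.th_nonneg e₀)) _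
  exists_isLip := by
    obtain ⟨g, hg, hgs, hgt⟩ := hG.exists_isLip
    obtain ⟨ρ, hρ, hρs, hρt⟩ := hH.exists_isLip
    let ψ (v : H.V) : ℝ := g (G.dst e₀) + (g (G.src e₀) - g (G.dst e₀)) * ρ v
    refine ⟨replaceGlue e₀ g ψ, isLip_replaceGlue hg (fun f ↦ ?_) (by simp [ψ, hρs])
      (by simp [ψ, hρt]), hgs, hgt⟩
    simp only [ψ, add_sub_add_left_eq_sub, ← mul_sub, abs_mul]
    exact mul_le_mul (hg e₀) (hρ f) (abs_nonneg _) (hG.len_pos e₀).le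

/-- Inserting a block into an edge of a unit network of thickness one gives a block. -/
def Block.edgeReplace {κ : ℝ} (B : Block H κ) (hG : G.IsUnitNetwork 0) (e₀ : G.ι) :
    Block (G.edgeReplace e₀ H) (G.len e₀ * κ) where
  lev := Sum.elim (fun _ ↦ 0) B.lev
  isUnitNetwork := by simpa using hG.edgeReplace B.isUnitNetwork e₀
  lev_le_one := Sum.rec (fun _ ↦ zero_le_one) B.lev_le_one
  top := replaceEmbed e₀ B.top
  bot := replaceEmbed e₀ B.bot
  height := replaceGlue e₀ 0 fun v ↦ G.len e₀ * B.height v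
  isLip_height := by
    have hlen (e : G.ι) : 0 ≤ G.len e := (hG.len_pos e).le
    refine isLip_replaceGlue (fun e ↦ by simpa using hlen e) (fun f ↦ ?_)
      (by simp [B.height_s]) (by simp [B.height_t])
    rw [← mul_sub, abs_mul, abs_of_nonneg (hlen e₀)]
    exact mul_le_mul_of_nonneg_left (B.isLip_height f) (hlen e₀)
  height_s := rfl
  height_t := rfl
  height_src_eq := by
    rintro (e | f) hf
    · rfl
    · change replaceGlue e₀ _ _ (replaceEmbed e₀ _) = replaceGlue e₀ _ _ (replaceEmbed e₀ _)
      rw [replaceGlue_replaceEmbed, replaceGlue_replaceEmbed, B.height_src_eq f hf] <;>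
        simp [B.height_s, B.height_t]
  height_top_sub_bot := by
    rw [replaceGlue_replaceEmbed, replaceGlue_replaceEmbed, ← mul_sub, B.height_top_sub_bot] <;>
      simp [B.height_s, B.height_t]
  abs_sub_le ψ := by
    refine (B.abs_sub_le fun v ↦ ψ (replaceEmbed e₀ v)).trans_eq ?_
    simp [sum_filter, sum_edgeReplace, edgeVar_edgeReplace_inr, hG.th_eq]

end EdgeReplace

end WGraph

namespace WGraph

variable {G : WGraph}

/-- The directed path with edges `E 0, …, E (k - 1)` running through the vertices
`v 0, …, v k`. -/
def IsEdgePath (G : WGraph) {k : ℕ} (v : Fin (k + 1) → G.V) (E : Fin k → G.ι) : Prop :=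
  ∀ i, G.src (E i) = v i.castSucc ∧ G.dst (E i) = v i.succ

namespace IsEdgePath

lemma tail {k : ℕ} {v : Fin (k + 2) → G.V} {E : Fin (k + 1) → G.ι} (h : G.IsEdgePath v E) :
    G.IsEdgePath (fun i ↦ v i.succ) fun i ↦ E i.succ := fun i ↦ h i.succ

lemma abs_sub_le {k : ℕ} {v : Fin (k + 1) → G.V} {E : Fin k → G.ι} (h : G.IsEdgePath v E)
    (ψ : G.V → ℝ) (i : Fin (k + 1)) :
    |ψ (v 0) - ψ (v i)| ≤ ∑ l, |ψ (G.src (E l)) - ψ (G.dst (E l))| := by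
  induction k with
  | zero => simp [Fin.fin_one_eq_zero i]
  | succ k ih =>
    rcases Fin.eq_zero_or_eq_succ i with rfl | ⟨i, rfl⟩
    · simp [sum_nonneg]
    · rw [Fin.sum_univ_succ, (h 0).1, (h 0).2]
      exact (_root_.abs_sub_le _ _ _).trans (add_le_add_right (ih h.tail i) _)

lemma isDiWalk {k : ℕ} {v : Fin (k + 1) → G.V} {E : Fin k → G.ι} (h : G.IsEdgePath v E) :
    G.IsDiWalk (v 0) (v (Fin.last k)) (List.ofFn E) := by
  induction k with
  | zero => rfl
  | succ k ih =>
    rw [List.ofFn_succ]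
    refine ⟨(h 0).1, ?_⟩
    rw [(h 0).2]
    exact ih h.tail

lemma sum_len {k : ℕ} {v : Fin (k + 1) → G.V} {E : Fin k → G.ι} (h : G.IsEdgePath v E)
    (hG : IsSTGraph G) : ∑ i, G.len (E i) = G.gdist (v 0) (v (Fin.last k)) := by
  rw [hG.dir_geodesic _ _ _ h.isDiWalk, diLen, List.map_ofFn, List.sum_ofFn]
  rfl

end IsEdgePath

end WGraph

namespace IsSTGraph

open WGraph

variable {G : WGraph}

lemma gdist_src_dst (hG : IsSTGraph G) (e : G.ι) : G.gdist (G.src e) (G.dst e) = G.len e := by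
  rw [hG.dir_geodesic _ _ [e] ⟨rfl, rfl⟩]
  simp [diLen]

lemma len_nonneg (hG : IsSTGraph G) (e : G.ι) : 0 ≤ G.len e := (hG.len_pos e).le

lemma exists_isLip (hG : IsSTGraph G) : ∃ ρ, G.IsLip ρ ∧ ρ G.s = 1 ∧ ρ G.t = 0 :=
  ⟨(G.gdist · G.t), isLip_gdist hG.len_nonneg hG.conn _, hG.dist_st, gdist_self hG.len_nonneg _⟩

lemma isUnitNetwork_of_isSTPath (hG : IsSTGraph G) (hpath : IsSTPath G) : G.IsUnitNetwork 0 := by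
  obtain ⟨k, E, v, -, hs, ht, hE, hth⟩ := hpath
  have hpath : G.IsEdgePath v E := hE
  refine ⟨⟨hG.conn, hG.len_pos, fun e ↦ by simp [hth], ?_⟩, fun ψ ↦ ?_, hG.exists_isLip⟩
  · simp only [hth, one_mul]
    rw [← E.sum_comp, hpath.sum_len hG, hs, ht, hG.dist_st]
  · simp only [edgeVar, hth, one_mul]
    rw [← E.sum_comp, ← hs, ← ht]
    exact hpath.abs_sub_le ψ _

end IsSTGraph

namespace WGraph

variable {G : WGraph}

/-- The distance to the set `{s, t}` of terminals. -/
noncomputable def terminalDist (G : WGraph) (x : G.V) : ℝ :=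
  min (G.gdist x G.s) (G.gdist x G.t)

lemma terminalDist_s (hlen : ∀ e, 0 ≤ G.len e) : G.terminalDist G.s = 0 := by
  simp [terminalDist, gdist_self hlen, gdist_nonneg hlen]

lemma terminalDist_t (hlen : ∀ e, 0 ≤ G.len e) : G.terminalDist G.t = 0 := by
  simp [terminalDist, gdist_self hlen, gdist_nonneg hlen]

lemma isLip_terminalDist (hlen : ∀ e, 0 ≤ G.len e) (hG : G.IsConnected) :
    G.IsLip G.terminalDist := fun e ↦
  (abs_min_sub_min_le_max _ _ _ _).trans
    (max_le (isLip_gdist hlen hG _ e) (isLip_gdist hlen hG _ e))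

/-- An `st`-cycle, presented by its two directed paths `v₁`, `v₂` from `s` to `t` and the
enumeration `E` of its edges along them. -/
structure IsSTCycle (G : WGraph) {k₁ k₂ : ℕ} (v₁ : Fin (k₁ + 1) → G.V)
    (v₂ : Fin (k₂ + 1) → G.V) (E : Fin k₁ ⊕ Fin k₂ ≃ G.ι) : Prop where
  isEdgePath_left : G.IsEdgePath v₁ (E ∘ .inl)
  isEdgePath_right : G.IsEdgePath v₂ (E ∘ .inr)
  left_zero : v₁ 0 = G.s
  left_last : v₁ (Fin.last k₁) = G.t
  right_zero : v₂ 0 = G.s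
  right_last : v₂ (Fin.last k₂) = G.t
  eq_s_or_eq_t : ∀ i j, v₁ i = v₂ j → v₁ i = G.s ∨ v₁ i = G.t
  th_eq : ∀ e, G.th e = 1 / 2

namespace IsSTCycle

variable {k₁ k₂ : ℕ} {v₁ : Fin (k₁ + 1) → G.V} {v₂ : Fin (k₂ + 1) → G.V}
  {E : Fin k₁ ⊕ Fin k₂ ≃ G.ι}

lemma abs_sub_add_abs_sub_le (hC : G.IsSTCycle v₁ v₂ E) (ψ : G.V → ℝ) (i : Fin (k₁ + 1))
    (j : Fin (k₂ + 1)) :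
    |ψ G.s - ψ (v₁ i)| + |ψ G.s - ψ (v₂ j)| ≤ 2 * ∑ e, G.edgeVar ψ e := by
  have hleft := hC.isEdgePath_left.abs_sub_le ψ i
  have hright := hC.isEdgePath_right.abs_sub_le ψ j
  rw [hC.left_zero] at hleft
  rw [hC.right_zero] at hright
  simp only [edgeVar, hC.th_eq, ← mul_sum]
  rw [← mul_assoc, mul_one_div_cancel two_ne_zero, one_mul, ← E.sum_comp, Fintype.sum_sum_type]
  exact add_le_add hleft hright

lemma isUnitNetwork (hC : G.IsSTCycle v₁ v₂ E) (hG : IsSTGraph G) : G.IsUnitNetwork 1 := by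
  refine ⟨⟨hG.conn, hG.len_pos, fun e ↦ by simp [hC.th_eq], ?_⟩, fun ψ ↦ ?_, hG.exists_isLip⟩
  · have hleft := hC.isEdgePath_left.sum_len hG
    have hright := hC.isEdgePath_right.sum_len hG
    rw [hC.left_zero, hC.left_last, hG.dist_st] at hleft
    rw [hC.right_zero, hC.right_last, hG.dist_st] at hright
    simp only [Function.comp_apply] at hleft hright
    simp only [hC.th_eq, ← mul_sum]
    rw [← E.sum_comp, Fintype.sum_sum_type, hleft, hright]
    norm_num
  · have := hC.abs_sub_add_abs_sub_le ψ (Fin.last k₁) (Fin.last k₂)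
    rw [hC.left_last, hC.right_last] at this
    linarith

open Classical in
/-- The signed height on an `st`-cycle: the distance to the terminals, counted positively on the
path `v₁` and negatively off it. -/
noncomputable def height (v₁ : Fin (k₁ + 1) → G.V) (x : G.V) : ℝ :=
  if x ∈ Set.range v₁ then G.terminalDist x else -G.terminalDist x

lemma height_left (i : Fin (k₁ + 1)) : height v₁ (v₁ i) = G.terminalDist (v₁ i) :=
  if_pos ⟨i, rfl⟩

lemma height_right (hC : G.IsSTCycle v₁ v₂ E) (hlen : ∀ e, 0 ≤ G.len e) (j : Fin (k₂ + 1)) :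
    height v₁ (v₂ j) = -G.terminalDist (v₂ j) := by
  unfold height
  split_ifs with h
  · obtain ⟨i, hi⟩ := h
    have : G.terminalDist (v₂ j) = 0 := by
      rw [← hi]
      rcases hC.eq_s_or_eq_t i j hi with h | h
      · rw [h, terminalDist_s hlen]
      · rw [h, terminalDist_t hlen]
    rw [this, neg_zero]
  · rfl

lemma isLip_height (hC : G.IsSTCycle v₁ v₂ E) (hlen : ∀ e, 0 ≤ G.len e) (hG : G.IsConnected) :
    G.IsLip (height v₁) := by
  intro e
  have hdist := isLip_terminalDist hlen hG e
  obtain ⟨i | j, rfl⟩ := E.surjective e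
  · obtain ⟨hsrc, hdst⟩ := hC.isEdgePath_left i
    simp only [Function.comp_apply] at hsrc hdst
    rw [hsrc, hdst] at hdist ⊢
    rwa [height_left, height_left]
  · obtain ⟨hsrc, hdst⟩ := hC.isEdgePath_right j
    simp only [Function.comp_apply] at hsrc hdst
    rw [hsrc, hdst] at hdist ⊢
    rwa [hC.height_right hlen, hC.height_right hlen, neg_sub_neg, abs_sub_comm]

/-- The block formed by an `st`-cycle and a vertex on each of its two paths. -/
noncomputable def block (hC : G.IsSTCycle v₁ v₂ E) (hG : IsSTGraph G) (i : Fin (k₁ + 1))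
    (j : Fin (k₂ + 1)) : Block G (G.terminalDist (v₁ i) + G.terminalDist (v₂ j)) where
  lev := 1
  isUnitNetwork := hC.isUnitNetwork hG
  lev_le_one _ := le_rfl
  top := v₁ i
  bot := v₂ j
  height := height v₁
  isLip_height := hC.isLip_height hG.len_nonneg hG.conn
  height_s := by rw [← hC.left_zero, height_left, hC.left_zero, terminalDist_s hG.len_nonneg]
  height_t := by rw [← hC.left_last, height_left, hC.left_last, terminalDist_t hG.len_nonneg]
  height_src_eq _ h := absurd h one_ne_zero
  height_top_sub_bot := by rw [height_left, hC.height_right hG.len_nonneg, sub_neg_eq_add]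
  abs_sub_le ψ := by
    refine (_root_.abs_sub_le _ (ψ G.s) _).trans ?_
    rw [abs_sub_comm (ψ (v₁ i))]
    simpa using hC.abs_sub_add_abs_sub_le ψ i j

end IsSTCycle

end WGraph

/-- Let `H = Pa ∪_{e₀} Cy` be a cycle-with-handles, where `Pa` is an
`st`-path, `e₀ ∈ E(Pa)`, and `Cy` is an `st`-cycle whose two directed paths from `s_Cy` to
`t_Cy` are given by the vertex sequences `v₁ : Fin (k₁+1) → Cy.V` and
`v₂ : Fin (k₂+1) → Cy.V` (each with at least three vertices, sharing only `s_Cy` and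
`t_Cy`, together covering `Cy`, all edges of thickness `1/2`). Let `d_rep = d_Pa(e₀)` and
`ht_cyc = max_{u∈γ₁} dist_Cy(u,{s,t}) + max_{u∈γ₂} dist_Cy(u,{s,t})`. Then for every
`n ≥ 0`, `c₁(TC(H^{⊘n})) ≥ ((2−√2)/4)·d_rep·ht_cyc·n`. -/
theorem c1_TC_cycleWithHandles_lower
    (Pa : WGraph) (hPa : IsSTGraph Pa) (hPaPath : IsSTPath Pa) (e₀ : Pa.ι)
    (Cy : WGraph) (hCy : IsSTGraph Cy)
    (k₁ k₂ : ℕ) (hk₁ : 2 ≤ k₁) (hk₂ : 2 ≤ k₂)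
    (v₁ : Fin (k₁ + 1) → Cy.V) (v₂ : Fin (k₂ + 1) → Cy.V)
    (E : Fin k₁ ⊕ Fin k₂ ≃ Cy.ι)
    (hv₁inj : Function.Injective v₁) (hv₂inj : Function.Injective v₂)
    (hv₁0 : v₁ 0 = Cy.s) (hv₁l : v₁ (Fin.last k₁) = Cy.t)
    (hv₂0 : v₂ 0 = Cy.s) (hv₂l : v₂ (Fin.last k₂) = Cy.t)
    (hshare : ∀ i j, v₁ i = v₂ j → v₁ i = Cy.s ∨ v₁ i = Cy.t)
    (hcover : ∀ x : Cy.V, (∃ i, v₁ i = x) ∨ (∃ j, v₂ j = x))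
    (hE₁ : ∀ i : Fin k₁,
      Cy.src (E (Sum.inl i)) = v₁ i.castSucc ∧ Cy.dst (E (Sum.inl i)) = v₁ i.succ)
    (hE₂ : ∀ j : Fin k₂,
      Cy.src (E (Sum.inr j)) = v₂ j.castSucc ∧ Cy.dst (E (Sum.inr j)) = v₂ j.succ)
    (hth : ∀ e, Cy.th e = 1 / 2) :
    ∀ n : ℕ,
      c1TC ((Pa.edgeReplace e₀ Cy).slashPow n).gdist ≥
        (2 - Real.sqrt 2) / 4 * Pa.gdist (Pa.src e₀) (Pa.dst e₀) *
          ((Finset.univ.sup' Finset.univ_nonempty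
              (fun i : Fin (k₁ + 1) =>
                min (Cy.gdist (v₁ i) Cy.s) (Cy.gdist (v₁ i) Cy.t))) +
           (Finset.univ.sup' Finset.univ_nonempty
              (fun j : Fin (k₂ + 1) =>
                min (Cy.gdist (v₂ j) Cy.s) (Cy.gdist (v₂ j) Cy.t)))) * n := by
  intro n
  obtain ⟨i, -, hi⟩ := exists_mem_eq_sup' univ_nonempty fun i ↦ Cy.terminalDist (v₁ i)
  obtain ⟨j, -, hj⟩ := exists_mem_eq_sup' univ_nonempty fun j ↦ Cy.terminalDist (v₂ j)
  have hcycle : Cy.IsSTCycle v₁ v₂ E := ⟨hE₁, hE₂, hv₁0, hv₁l, hv₂0, hv₂l, hshare, hth⟩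
  let B := (hcycle.block hCy i j).edgeReplace (hPa.isUnitNetwork_of_isSTPath hPaPath) e₀
  have hbound := (WGraph.ChordFamily.slashPow B n).le_c1TC
  unfold WGraph.terminalDist at hi hj hbound
  rwa [hPa.gdist_src_dst, hi, hj, mul_assoc (_ / 4)]
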